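/- arXiv:2109.08656 — 4 statements merged into one kernel-verified Lean document; each statement's English description precedes it below -/
import Mathlib

section
/- Let ℓ be a prime number, r a positive integer, Γ a group, and ρ₁, ρ₂ : Γ → GL_r(ℤ_ℓ) group homomorphisms into the group of invertible r×r matrices over the ℓ-adic integers. Suppose there exists an element γ ∈ Γ with tr ρ₁(γ) ≠ tr ρ₂(γ). Then there exist a finite group G, a surjective group homomorphism π : Γ → G, and a subset C ⊆ G such that: (1) the order of G is at most (ℓ^(2r²) − 1)/(ℓ − 1); (2) C is nonempty and closed under conjugation in G; and (3) for every γ ∈ Γ, if π(γ) ∈ C then tr ρ₁(γ) ≠ tr ρ₂(γ). -/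
open Matrix

open scoped TensorProduct

/-!
Let `A ⊆ M_r(ℤ_ℓ) × M_r(ℤ_ℓ)` be the image of the group algebra of `Γ` under `(ρ₁, ρ₂)`; it is free
of rank at most `2r²`. Let `N` consist of the `γ` acting as scalars on `A / ℓA`: then `Γ / N` embeds
into `(A / ℓA)ˣ / 𝔽_ℓˣ`, which has at most `(ℓ^(2r²) - 1) / (ℓ - 1)` elements. The linear form
`f = tr - tr` on `A` is a power of `ℓ` times a surjective form, whose reduction `φ` modulo `ℓ` does
not vanish on all of `Γ`. As `N` acts by scalars, whether `φ` vanishes at `γ` depends only on the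
coset of `γ`, and `f γ ≠ 0` whenever `φ γ ≠ 0`.
-/

section LinearForm

variable {R V : Type*} [CommRing R] [IsDomain R] [IsPrincipalIdealRing R]
  [AddCommGroup V] [Module R V]

theorem exists_eq_smul_surjective_of_ne_zero {f : V →ₗ[R] R} (hf : f ≠ 0) :
    ∃ a : R, a ≠ 0 ∧ ∃ g : V →ₗ[R] R, Function.Surjective g ∧ f = a • g := by
  obtain ⟨a, ha⟩ : ∃ a, f.range = Submodule.span R {a} :=
    (IsPrincipalIdealRing.principal f.range).principal
  have ha₀ : a ≠ 0 := by
    rintro rfl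
    exact hf (LinearMap.range_eq_bot.mp (by simpa using ha))
  let e : f.range ≃ₗ[R] R :=
    (LinearEquiv.ofEq _ _ ha).trans (LinearEquiv.toSpanNonzeroSingleton R R a ha₀).symm
  refine ⟨a, ha₀, e.toLinearMap ∘ₗ f.rangeRestrict,
    e.surjective.comp f.surjective_rangeRestrict, LinearMap.ext fun v ↦ ?_⟩
  have : e (f.rangeRestrict v) • a = f v :=
    LinearEquiv.toSpanNonzeroSingleton_symm_apply_smul R R a ha₀ (LinearEquiv.ofEq _ _ ha _)
  rw [← this, smul_eq_mul, mul_comm]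
  rfl

theorem exists_linearForm_baseChange_ne_zero (k : Type*) [CommRing k] [Nontrivial k] [Algebra R k]
    {f : V →ₗ[R] R} (hf : f ≠ 0) :
    ∃ φ : k ⊗[R] V →ₗ[k] k, φ ≠ 0 ∧ ∀ v, f v = 0 → φ (1 ⊗ₜ v) = 0 := by
  obtain ⟨a, ha, g, hg, rfl⟩ := exists_eq_smul_surjective_of_ne_zero hf
  refine ⟨(Algebra.linearMap R k ∘ₗ g).liftBaseChange k, fun h ↦ ?_, fun v hv ↦ ?_⟩
  · obtain ⟨v, hv⟩ := hg 1
    simpa [hv] using LinearMap.congr_fun h (1 ⊗ₜ v)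
  · have : g v = 0 := by simpa [ha] using hv
    simp [this]

end LinearForm

section Index

variable {G H : Type*} [Group G] [Group H] (K : Subgroup H) [K.FiniteIndex] (f : G →* H)

theorem index_comap_le : (K.comap f).index ≤ K.index := by
  rw [Subgroup.index_comap, ← Subgroup.relIndex_top_right]
  exact Subgroup.relIndex_le_of_le_right le_top (by simpa using Subgroup.FiniteIndex.index_ne_zero)

theorem finiteIndex_comap : (K.comap f).FiniteIndex where
  index_ne_zero := by
    rw [Subgroup.index_comap]
    exact (inferInstance : (K.subgroupOf f.range).FiniteIndex).index_ne_zero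

end Index

section ProjectiveKernel

variable (k : Type*) {B Γ : Type*} [CommRing k] [Ring B] [Algebra k B] [Group Γ] (ρ : Γ →* B)

/-- The kernel of the projective representation attached to `ρ`: the elements of `Γ` which `ρ` sends
to scalars. -/
def projectiveKernel : Subgroup Γ :=
  (Units.map (algebraMap k B).toMonoidHom).range.comap ρ.toHomUnits

variable {k ρ} in
theorem mem_projectiveKernel {γ : Γ} :
    γ ∈ projectiveKernel k ρ ↔ ∃ c : kˣ, algebraMap k B c = ρ γ := by
  simp [projectiveKernel, Units.ext_iff]

instance projectiveKernel_normal : (projectiveKernel k ρ).Normal where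
  conj_mem γ hγ δ := by
    obtain ⟨c, hc⟩ := mem_projectiveKernel.mp hγ
    refine mem_projectiveKernel.mpr ⟨c, ?_⟩
    rw [map_mul, map_mul, ← hc, ← Algebra.commutes, mul_assoc, ← map_mul, mul_inv_cancel, map_one,
      mul_one]

variable {k ρ} in
theorem apply_eq_zero_iff_of_mk_eq (φ : B →ₗ[k] k) {γ δ : Γ}
    (h : (γ : Γ ⧸ projectiveKernel k ρ) = δ) : φ (ρ γ) = 0 ↔ φ (ρ δ) = 0 := by
  obtain ⟨c, hc⟩ := mem_projectiveKernel.mp (QuotientGroup.eq.mp h)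
  have : ρ δ = c • ρ γ := by
    rw [Units.smul_def, Algebra.smul_def, Algebra.commutes, hc, ← map_mul, mul_inv_cancel_left]
  rw [this, Units.smul_def, map_smul, ← Units.smul_def, smul_eq_zero_iff_eq]

variable {k} in
/-- The cosets of the projective kernel on which a linear form does not vanish. They are encoded as
an image; by `mk_mem_nonvanishingCosets` any representative may be tested. -/
def nonvanishingCosets (φ : B →ₗ[k] k) : Set (Γ ⧸ projectiveKernel k ρ) :=
  QuotientGroup.mk '' {γ | φ (ρ γ) ≠ 0}

variable {k ρ} in
theorem mk_mem_nonvanishingCosets {φ : B →ₗ[k] k} {γ : Γ} :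
    QuotientGroup.mk γ ∈ nonvanishingCosets ρ φ ↔ φ (ρ γ) ≠ 0 := by
  refine ⟨?_, fun h ↦ ⟨γ, h, rfl⟩⟩
  rintro ⟨δ, hδ, h⟩
  exact (apply_eq_zero_iff_of_mk_eq φ h).not.mp hδ

instance projectiveKernel_finiteIndex [Finite B] : (projectiveKernel k ρ).FiniteIndex :=
  finiteIndex_comap _ _

end ProjectiveKernel

theorem index_projectiveKernel_le (k : Type*) {B Γ : Type*} [Field k] [Finite k] [Ring B]
    [Finite B] [Nontrivial B] [Algebra k B] [Group Γ] (ρ : Γ →* B) :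
    (projectiveKernel k ρ).index ≤ (Nat.card B - 1) / (Nat.card k - 1) := by
  let S : Subgroup Bˣ := (Units.map (algebraMap k B).toMonoidHom).range
  have card_scalars : Nat.card S = Nat.card k - 1 :=
    (Nat.card_range_of_injective (Units.map_injective (algebraMap k B).injective)).trans
      (Nat.card_units k)
  rw [Nat.le_div_iff_mul_le (Nat.sub_pos_of_lt Finite.one_lt_card)]
  calc (projectiveKernel k ρ).index * (Nat.card k - 1)
      ≤ S.index * Nat.card S := by
        rw [card_scalars]
        exact Nat.mul_le_mul_right _ (index_comap_le S ρ.toHomUnits)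
    _ = Nat.card Bˣ := S.index_mul_card
    _ ≤ Nat.card B - 1 := Nat.le_sub_one_of_lt (natCard_units_lt B)

section Reduction

variable (R k : Type*) {M Γ : Type*} [CommRing R] [CommRing k] [Algebra R k] [Ring M] [Algebra R M]
  [Group Γ] (ρ : Γ →* M)

/-- The `R`-algebra generated by the image of `ρ`, encoded as the image of the group algebra so
that linear maps out of it can be tested on `Γ`. -/
noncomputable def imageAlgebra : Subalgebra R M :=
  (MonoidAlgebra.lift R M Γ ρ).range

/-- `ρ` viewed as a representation in `imageAlgebra R ρ`. -/
noncomputable def toImageAlgebra : Γ →* imageAlgebra R ρ :=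
  (MonoidAlgebra.lift R M Γ ρ).rangeRestrict.toMonoidHom.comp (MonoidAlgebra.of R Γ)

@[simp]
theorem coe_toImageAlgebra (γ : Γ) : (toImageAlgebra R ρ γ : M) = ρ γ :=
  MonoidAlgebra.lift_of ρ γ

/-- The reduction of `ρ` along `R → k`. It is taken in the base change of `imageAlgebra R ρ` and not
of `M`, since a linear form divisible by a prime on the image of `ρ` need not be so on `M`. -/
noncomputable def reduction : Γ →* k ⊗[R] imageAlgebra R ρ :=
  (Algebra.TensorProduct.includeRight :
    imageAlgebra R ρ →ₐ[R] k ⊗[R] imageAlgebra R ρ).toMonoidHom.comp (toImageAlgebra R ρ)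

theorem reduction_apply (γ : Γ) : reduction R k ρ γ = 1 ⊗ₜ toImageAlgebra R ρ γ :=
  rfl

variable {R ρ} in
theorem imageAlgebra_linearMap_ext {V : Type*} [AddCommMonoid V] [Module R V]
    {f g : imageAlgebra R ρ →ₗ[R] V}
    (h : ∀ γ, f (toImageAlgebra R ρ γ) = g (toImageAlgebra R ρ γ)) : f = g := by
  let π : MonoidAlgebra R Γ →ₗ[R] imageAlgebra R ρ :=
    (MonoidAlgebra.lift R M Γ ρ).rangeRestrict.toLinearMap
  have : f ∘ₗ π = g ∘ₗ π := MonoidAlgebra.lhom_ext' fun γ ↦ LinearMap.ext_ring (h γ)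
  have hπ : Function.Surjective π := (MonoidAlgebra.lift R M Γ ρ).rangeRestrict_surjective
  exact (LinearMap.cancel_right hπ).mp this

variable {R k ρ} in
theorem exists_apply_reduction_ne_zero {φ : k ⊗[R] imageAlgebra R ρ →ₗ[k] k} (hφ : φ ≠ 0) :
    ∃ γ, φ (reduction R k ρ γ) ≠ 0 := by
  contrapose! hφ
  refine TensorProduct.AlgebraTensorModule.curry_injective (LinearMap.ext_ring ?_)
  exact imageAlgebra_linearMap_ext hφ

variable {R ρ} in
theorem exists_conj_closed_forall_apply_ne_zero [IsDomain R] [IsPrincipalIdealRing R]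
    [Nontrivial k] {f : M →ₗ[R] R}
    (conj_apply : ∀ γ δ, f (ρ (δ * γ * δ⁻¹)) = f (ρ γ)) (hf : ∃ γ, f (ρ γ) ≠ 0) :
    ∃ C : Set (Γ ⧸ projectiveKernel k (reduction R k ρ)), C.Nonempty ∧
      (∀ γ δ : Γ, QuotientGroup.mk γ ∈ C → QuotientGroup.mk (δ * γ * δ⁻¹) ∈ C) ∧
      (∀ γ : Γ, QuotientGroup.mk γ ∈ C → f (ρ γ) ≠ 0) := by
  let f' : imageAlgebra R ρ →ₗ[R] R := f ∘ₗ (imageAlgebra R ρ).val.toLinearMap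
  have hf' : f' ≠ 0 := by
    intro h
    obtain ⟨γ, hγ⟩ := hf
    exact hγ (by simpa [f'] using LinearMap.congr_fun h (toImageAlgebra R ρ γ))
  obtain ⟨φ, hφ, hφf⟩ := exists_linearForm_baseChange_ne_zero k hf'
  have conj_apply_reduction (γ δ : Γ) :
      φ (reduction R k ρ (δ * γ * δ⁻¹)) = φ (reduction R k ρ γ) := by
    rw [← sub_eq_zero, ← map_sub, reduction_apply, reduction_apply, ← TensorProduct.tmul_sub]
    apply hφf
    rw [map_sub, sub_eq_zero]
    simpa only [f', LinearMap.comp_apply, AlgHom.toLinearMap_apply, Subalgebra.coe_val,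
      coe_toImageAlgebra] using conj_apply γ δ
  refine ⟨nonvanishingCosets (reduction R k ρ) φ, ?_, fun γ δ h ↦ ?_, fun γ h hγ ↦ ?_⟩
  · exact Set.Nonempty.image _ (exists_apply_reduction_ne_zero hφ)
  · rw [mk_mem_nonvanishingCosets] at h ⊢
    rwa [conj_apply_reduction]
  · exact mk_mem_nonvanishingCosets.mp h (hφf _ (by simpa [f'] using hγ))

instance imageAlgebra_finite [IsNoetherianRing R] [Module.Finite R M] :
    Module.Finite R (imageAlgebra R ρ) :=
  inferInstanceAs (Module.Finite R (Subalgebra.toSubmodule (imageAlgebra R ρ)))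

instance imageAlgebra_free [IsDomain R] [IsPrincipalIdealRing R] [Module.Free R M]
    [Module.Finite R M] : Module.Free R (imageAlgebra R ρ) :=
  inferInstanceAs (Module.Free R (Subalgebra.toSubmodule (imageAlgebra R ρ)))

instance finite_baseChange_imageAlgebra [IsNoetherianRing R] [Module.Finite R M] [Finite k] :
    Finite (k ⊗[R] imageAlgebra R ρ) :=
  Module.finite_of_finite k

end Reduction

theorem index_projectiveKernel_reduction_le (R k : Type*) {M Γ : Type*} [CommRing R] [IsDomain R]
    [IsPrincipalIdealRing R] [Field k] [Finite k] [Algebra R k] [Ring M] [Nontrivial M]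
    [Algebra R M] [Module.Free R M] [Module.Finite R M] [Group Γ] (ρ : Γ →* M) :
    (projectiveKernel k (reduction R k ρ)).index ≤
      (Nat.card k ^ Module.finrank R M - 1) / (Nat.card k - 1) := by
  have finrank_le : Module.finrank R (imageAlgebra R ρ) ≤ Module.finrank R M :=
    Submodule.finrank_le (Subalgebra.toSubmodule (imageAlgebra R ρ))
  have card_le : Nat.card (k ⊗[R] imageAlgebra R ρ) ≤ Nat.card k ^ Module.finrank R M := by
    rw [Module.natCard_eq_pow_finrank (K := k), Module.finrank_baseChange]
    exact Nat.pow_le_pow_right Nat.card_pos finrank_le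
  refine (index_projectiveKernel_le k (reduction R k ρ)).trans ?_
  gcongr

section Trace

variable {R ι₁ ι₂ : Type*} [CommRing R] [Fintype ι₁] [Fintype ι₂]

variable (R ι₁ ι₂) in
/-- The form `(x, y) ↦ tr x - tr y`; at `(ρ₁ γ, ρ₂ γ)` it is the difference of the characters. -/
def traceSub : Matrix ι₁ ι₁ R × Matrix ι₂ ι₂ R →ₗ[R] R :=
  (Matrix.traceLinearMap ι₁ R R).coprod (-Matrix.traceLinearMap ι₂ R R)

theorem traceSub_apply (x : Matrix ι₁ ι₁ R × Matrix ι₂ ι₂ R) :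
    traceSub R ι₁ ι₂ x = x.1.trace - x.2.trace := by
  simp [traceSub, sub_eq_add_neg]

theorem traceSub_mul_comm (x y : Matrix ι₁ ι₁ R × Matrix ι₂ ι₂ R) :
    traceSub R ι₁ ι₂ (x * y) = traceSub R ι₁ ι₂ (y * x) := by
  simp only [traceSub_apply, Prod.fst_mul, Prod.snd_mul, Matrix.trace_mul_comm x.1,
    Matrix.trace_mul_comm x.2]

end Trace

theorem stmt_0_general {R : Type*} [CommRing R] [IsDomain R] [IsPrincipalIdealRing R]
    (k : Type*) [Field k] [Finite k] [Algebra R k] {ι₁ ι₂ : Type*} [Fintype ι₁] [DecidableEq ι₁]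
    [Fintype ι₂] [DecidableEq ι₂] {Γ : Type*} [Group Γ] (ρ₁ : Γ →* GL ι₁ R) (ρ₂ : Γ →* GL ι₂ R)
    (hγ : ∃ γ, (ρ₁ γ).val.trace ≠ (ρ₂ γ).val.trace) :
    ∃ N : Subgroup Γ, N.Normal ∧
      Finite (Γ ⧸ N) ∧
      Nat.card (Γ ⧸ N) ≤
        (Nat.card k ^ (Fintype.card ι₁ ^ 2 + Fintype.card ι₂ ^ 2) - 1) / (Nat.card k - 1) ∧
      ∃ C : Set (Γ ⧸ N), C.Nonempty ∧
        (∀ γ δ : Γ, QuotientGroup.mk γ ∈ C → QuotientGroup.mk (δ * γ * δ⁻¹) ∈ C) ∧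
        (∀ γ : Γ, QuotientGroup.mk γ ∈ C → (ρ₁ γ).val.trace ≠ (ρ₂ γ).val.trace) := by
  let M := Matrix ι₁ ι₁ R × Matrix ι₂ ι₂ R
  let ρ : Γ →* M := ((Units.coeHom _).comp ρ₁).prod ((Units.coeHom _).comp ρ₂)
  have traceSub_ne_zero_iff (γ : Γ) :
      traceSub R ι₁ ι₂ (ρ γ) ≠ 0 ↔ (ρ₁ γ).val.trace ≠ (ρ₂ γ).val.trace := by
    rw [traceSub_apply, sub_ne_zero]
    rfl
  have traceSub_conj (γ δ : Γ) : traceSub R ι₁ ι₂ (ρ (δ * γ * δ⁻¹)) = traceSub R ι₁ ι₂ (ρ γ) := by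
    rw [map_mul, traceSub_mul_comm, ← map_mul, inv_mul_cancel_left]
  simp only [← traceSub_ne_zero_iff] at hγ ⊢
  have : Nontrivial M := by
    obtain ⟨γ, hγ⟩ := hγ
    exact ⟨ρ γ, 0, fun h ↦ hγ (by rw [h, map_zero])⟩
  have finrank_eq : Module.finrank R M = Fintype.card ι₁ ^ 2 + Fintype.card ι₂ ^ 2 := by
    simp [M, Module.finrank_matrix, sq]
  rw [← finrank_eq]
  exact ⟨projectiveKernel k (reduction R k ρ), inferInstance, inferInstance,
    index_projectiveKernel_reduction_le R k ρ,
    exists_conj_closed_forall_apply_ne_zero k traceSub_conj hγ⟩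

/-- Serre's proposition: if `ρ₁, ρ₂ : Γ → GL_r(ℤ_ℓ)` are group homomorphisms whose traces
differ at some element, then there is a finite quotient `G = Γ/N` of `Γ` of order at most
`(ℓ^(2r²) − 1)/(ℓ − 1)` and a nonempty conjugation-closed subset `C ⊆ G` such that any
`γ ∈ Γ` whose image in `G` lies in `C` satisfies `tr ρ₁(γ) ≠ tr ρ₂(γ)`. -/
theorem stmt_0 (ℓ : ℕ) [Fact ℓ.Prime] (r : ℕ) (hr : 0 < r) (Γ : Type*) [Group Γ]
    (ρ₁ ρ₂ : Γ →* GL (Fin r) ℤ_[ℓ])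
    (hγ : ∃ γ : Γ, Matrix.trace ((ρ₁ γ : GL (Fin r) ℤ_[ℓ]) : Matrix (Fin r) (Fin r) ℤ_[ℓ])
        ≠ Matrix.trace ((ρ₂ γ : GL (Fin r) ℤ_[ℓ]) : Matrix (Fin r) (Fin r) ℤ_[ℓ])) :
    ∃ N : Subgroup Γ, N.Normal ∧
      Finite (Γ ⧸ N) ∧
      Nat.card (Γ ⧸ N) ≤ (ℓ ^ (2 * r ^ 2) - 1) / (ℓ - 1) ∧
      ∃ C : Set (Γ ⧸ N), C.Nonempty ∧
        (∀ γ δ : Γ, (QuotientGroup.mk γ : Γ ⧸ N) ∈ C →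
          (QuotientGroup.mk (δ * γ * δ⁻¹) : Γ ⧸ N) ∈ C) ∧
        (∀ γ : Γ, (QuotientGroup.mk γ : Γ ⧸ N) ∈ C →
          Matrix.trace ((ρ₁ γ : GL (Fin r) ℤ_[ℓ]) : Matrix (Fin r) (Fin r) ℤ_[ℓ])
            ≠ Matrix.trace ((ρ₂ γ : GL (Fin r) ℤ_[ℓ]) : Matrix (Fin r) (Fin r) ℤ_[ℓ])) := by
  let : Algebra ℤ_[ℓ] (ZMod ℓ) := PadicInt.toZMod.toAlgebra
  simpa [two_mul] using stmt_0_general (ZMod ℓ) ρ₁ ρ₂ hγ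
end

section
/- If K/ℚ is a nontrivial finite Galois extension of number fields, then ((1/2) log 3) · [K:ℚ] ≤ log d_K ≤ ([K:ℚ] − 1) · log rad(d_K) + [K:ℚ] · log([K:ℚ]), where d_K denotes the absolute value of the discriminant of K and rad(n) = ∏_{p ∣ n} p denotes the radical of an integer n (the product of the distinct prime divisors of n). -/
open NumberField

/-- The radical of a natural number: the product of its distinct prime divisors. -/
def natRadical (n : ℕ) : ℕ := ∏ p ∈ n.primeFactors, p

/-!
Let `n = [K:ℚ]`. The lower bound follows from Minkowski's inequality `(4/9) * (3π/4) ^ n ≤ d_K` when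
`n ≥ 3`, and from its consequence `d_K ≥ 3` when `n = 2`.

For the upper bound, let `𝔇` be the different ideal of `K/ℚ`. It is stable under the Galois group,
so the ideal of `𝓞 K` generated by its norm `d_K` is `𝔇 ^ n`. Hence if `a ^ n ∣ d_K` then `a ∣ 𝔇`,
which means that `a⁻¹` has integral trace; as that trace is `n / a`, this forces `a ∣ n`. Taking for
`a` the largest integer with `a ^ n ∣ d_K`, which satisfies `d_K ∣ rad (d_K) ^ (n - 1) * a ^ n`,
we get `d_K ∣ rad (d_K) ^ (n - 1) * n ^ n`.
-/

lemma natRadical_pos (d : ℕ) : 0 < natRadical d :=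
  Finset.prod_pos fun _ hp ↦ Nat.pos_of_mem_primeFactors hp

lemma one_le_factorization_natRadical {d p : ℕ} (hp : p ∈ d.primeFactors) :
    1 ≤ (natRadical d).factorization p :=
  (Nat.prime_of_mem_primeFactors hp).factorization_pos_of_dvd (natRadical_pos d).ne'
    (Finset.dvd_prod_of_mem _ hp)

lemma dvd_natRadical_pow_mul_floorRoot_pow {n : ℕ} (hn : n ≠ 0) (d : ℕ) :
    d ∣ natRadical d ^ (n - 1) * Nat.floorRoot n d ^ n := by
  rcases eq_or_ne d 0 with rfl | hd
  · simp [hn]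
  have hr : natRadical d ^ (n - 1) ≠ 0 := pow_ne_zero _ (natRadical_pos d).ne'
  have hf : Nat.floorRoot n d ^ n ≠ 0 := pow_ne_zero _ (Nat.floorRoot_ne_zero.2 ⟨hn, hd⟩)
  rw [← Nat.factorization_prime_le_iff_dvd hd (mul_ne_zero hr hf)]
  intro p hp
  by_cases hpd : p ∣ d
  · have hrad := one_le_factorization_natRadical (hp.mem_primeFactors hpd hd)
    calc d.factorization p
        = d.factorization p % n + n * (d.factorization p / n) := (Nat.mod_add_div _ _).symm
      _ ≤ (n - 1) * (natRadical d).factorization p + n * (d.factorization p / n) := by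
          gcongr
          exact (Nat.le_sub_one_of_lt (Nat.mod_lt _ (Nat.pos_of_ne_zero hn))).trans
            (Nat.le_mul_of_pos_right _ hrad)
      _ = (natRadical d ^ (n - 1) * Nat.floorRoot n d ^ n).factorization p := by
          simp [Nat.factorization_mul hr hf]
  · simp [Nat.factorization_eq_zero_of_not_dvd hpd]

lemma three_pow_le_four_ninths_mul_pow_sq {n : ℕ} (hn : 3 ≤ n) :
    (3 : ℝ) ^ n ≤ (4 / 9 * (3 * Real.pi / 4) ^ n) ^ 2 := by
  have hπ : (27 / 5 : ℝ) ≤ (3 * Real.pi / 4) ^ 2 := by nlinarith [Real.pi_gt_d2]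
  have h81 : (81 / 16 : ℝ) ≤ (9 / 5) ^ n :=
    le_trans (by norm_num) (pow_le_pow_right₀ (by norm_num : (1 : ℝ) ≤ 9 / 5) hn)
  calc (3 : ℝ) ^ n
      = 16 / 81 * (81 / 16 * 3 ^ n) := by ring
    _ ≤ 16 / 81 * ((9 / 5) ^ n * 3 ^ n) := by gcongr
    _ = 16 / 81 * (27 / 5) ^ n := by
        rw [← mul_pow]
        norm_num
    _ ≤ 16 / 81 * ((3 * Real.pi / 4) ^ 2) ^ n := by gcongr
    _ = (4 / 9 * (3 * Real.pi / 4) ^ n) ^ 2 := by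
        rw [mul_pow, pow_right_comm]
        norm_num

section Dedekind

open scoped nonZeroDivisors

attribute [local instance] FractionRing.liftAlgebra FractionRing.isScalarTower_liftAlgebra

variable {A B : Type*} [CommRing A] [CommRing B] [IsDedekindDomain B] [Algebra A B]
  [Module.IsTorsionFree A B]

section IsDomain

variable [IsDomain A]

lemma mem_differentIdeal_iff {x : B} :
    x ∈ differentIdeal A B ↔
      ∀ y ∈ Submodule.traceDual A (FractionRing A) (1 : Submodule B (FractionRing B)),
        ∃ b : B, algebraMap B (FractionRing B) b = algebraMap B (FractionRing B) x * y := by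
  simp [differentIdeal, Submodule.mem_div_iff_forall_mul_mem, Submodule.mem_one]

lemma map_differentIdeal_le (σ : B ≃ₐ[A] B) :
    (differentIdeal A B).map σ ≤ differentIdeal A B := by
  rw [Ideal.map_le_iff_le_comap]
  intro x hx
  rw [Ideal.mem_comap]
  rw [mem_differentIdeal_iff] at hx ⊢
  intro y hy
  let τ := IsFractionRing.fieldEquivOfAlgEquiv (FractionRing A) (FractionRing B) (FractionRing B) σ
  have hτ (b : B) : τ (algebraMap B _ b) = algebraMap B _ (σ b) :=
    IsFractionRing.fieldEquivOfAlgEquiv_algebraMap ..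
  have hτy : τ.symm y ∈
      Submodule.traceDual A (FractionRing A) (1 : Submodule B (FractionRing B)) := by
    rw [Submodule.mem_traceDual] at hy ⊢
    simp only [Submodule.mem_one, forall_exists_index, forall_apply_eq_imp_iff] at hy ⊢
    intro b
    rw [Algebra.traceForm_apply, ← Algebra.trace_eq_of_algEquiv τ, map_mul, hτ,
      AlgEquiv.apply_symm_apply]
    exact hy (σ b)
  obtain ⟨b, hb⟩ := hx _ hτy
  exact ⟨σ b, by rw [← hτ, hb, map_mul, hτ, AlgEquiv.apply_symm_apply]⟩

end IsDomain

variable [IsDedekindDomain A] [Module.Finite A B]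

lemma relNorm_eq_top_iff {I : Ideal B} : Ideal.relNorm A I = ⊤ ↔ I = ⊤ := by
  refine ⟨fun h ↦ ?_, fun h ↦ h ▸ Ideal.relNorm_top A⟩
  simpa [h, Ideal.comap_eq_top_iff] using Ideal.relNorm_le_comap A I

lemma card_algEquiv_eq_finrank [IsGalois (FractionRing A) (FractionRing B)] :
    Fintype.card (B ≃ₐ[A] B) = Module.finrank A B := by
  have : IsIntegralClosure B A (FractionRing B) := .of_isIntegrallyClosed ..
  have : FiniteDimensional (FractionRing A) (FractionRing B) := .of_isLocalization A B A⁰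
  rw [← IsFractionRing.finrank_eq A (FractionRing A) B (FractionRing B),
    ← IsGalois.card_aut_eq_finrank, Fintype.card_eq_nat_card]
  exact Nat.card_congr (galRestrict A (FractionRing A) (FractionRing B) B).toEquiv.symm

lemma map_relNorm_le_pow_finrank [IsGalois (FractionRing A) (FractionRing B)] {I : Ideal B}
    (hI : ∀ σ : B ≃ₐ[A] B, I.map σ ≤ I) :
    (Ideal.relNorm A I).map (algebraMap A B) ≤ I ^ Module.finrank A B := by
  rw [Ideal.map_relNorm, Ideal.span_le]
  rintro _ ⟨x, hx, rfl⟩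
  rw [Function.comp_apply, Algebra.algebraMap_intNorm_of_isGalois, ← card_algEquiv_eq_finrank,
    ← Finset.card_univ, ← Finset.prod_const]
  exact Ideal.prod_mem_prod fun σ _ ↦ hI σ (Ideal.mem_map_of_mem σ hx)

lemma map_relNorm_eq_pow_finrank [IsGalois (FractionRing A) (FractionRing B)] {I : Ideal B}
    (hI : ∀ σ : B ≃ₐ[A] B, I.map σ ≤ I) :
    (Ideal.relNorm A I).map (algebraMap A B) = I ^ Module.finrank A B := by
  rcases eq_or_ne I 0 with rfl | hI₀
  · rw [map_zero, zero_pow Module.finrank_pos.ne']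
    exact Ideal.map_bot
  obtain ⟨J, hJ⟩ := Ideal.dvd_iff_le.2 (map_relNorm_le_pow_finrank hI)
  have hnorm : Ideal.relNorm A I ^ Module.finrank A B * Ideal.relNorm A J =
      Ideal.relNorm A I ^ Module.finrank A B := by
    rw [← map_pow, ← map_mul, ← hJ, Ideal.relNorm_algebraMap, map_pow]
  have hJ_top : J = ⊤ := by
    rw [← relNorm_eq_top_iff (A := A), ← Ideal.one_eq_top]
    exact (mul_eq_left₀ (pow_ne_zero _ (Ideal.relNorm_eq_bot_iff.not.2 hI₀))).1 hnorm
  rw [hJ, hJ_top, Ideal.mul_top]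

lemma dvd_finrank_of_dvd_differentIdeal [Algebra.IsSeparable (FractionRing A) (FractionRing B)]
    {a : A} (h : Ideal.span {algebraMap A B a} ∣ differentIdeal A B) :
    a ∣ (Module.finrank A B : A) := by
  have : FiniteDimensional (FractionRing A) (FractionRing B) := .of_isLocalization A B A⁰
  have ha : a ≠ 0 := by
    rintro rfl
    rw [map_zero, Ideal.span_singleton_zero, ← Ideal.zero_eq_bot, zero_dvd_iff] at h
    exact differentIdeal_ne_bot h
  have haB : Ideal.span {algebraMap A B a} ≠ ⊥ := by simpa
  have haK : algebraMap A (FractionRing A) a ≠ 0 := by simpa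
  rw [Ideal.dvd_iff_le, differentialIdeal_le_iff (K := FractionRing A) (L := FractionRing B) haB,
    Submodule.map_le_iff_le_comap] at h
  have hmem : algebraMap (FractionRing A) (FractionRing B) (algebraMap A (FractionRing A) a)⁻¹ ∈
      (Ideal.span {algebraMap A B a} : FractionalIdeal B⁰ (FractionRing B))⁻¹ := by
    rw [FractionalIdeal.coeIdeal_span_singleton, FractionalIdeal.spanSingleton_inv, map_inv₀,
      ← IsScalarTower.algebraMap_apply, ← IsScalarTower.algebraMap_apply]
    exact FractionalIdeal.mem_spanSingleton_self ..
  obtain ⟨c, hc⟩ := Submodule.mem_one.1 (h hmem)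
  refine ⟨c, FaithfulSMul.algebraMap_injective A (FractionRing A) ?_⟩
  rw [LinearMap.restrictScalars_apply, Algebra.trace_algebraMap,
    IsFractionRing.finrank_eq A (FractionRing A) B (FractionRing B), nsmul_eq_mul] at hc
  rw [map_mul, hc, map_natCast, mul_left_comm, mul_inv_cancel₀ haK, mul_one]

lemma dvd_finrank_of_pow_dvd_relNorm_differentIdeal
    [IsGalois (FractionRing A) (FractionRing B)] {a : A}
    (h : Ideal.span {a} ^ Module.finrank A B ∣ Ideal.relNorm A (differentIdeal A B)) :
    a ∣ (Module.finrank A B : A) := by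
  have hpow : Ideal.span {algebraMap A B a} ^ Module.finrank A B ∣
      differentIdeal A B ^ Module.finrank A B := by
    rw [← map_relNorm_eq_pow_finrank map_differentIdeal_le, ← Set.image_singleton,
      ← Ideal.map_span, ← Ideal.map_pow]
    exact Ideal.dvd_iff_le.2 (Ideal.map_mono (Ideal.le_of_dvd h))
  exact dvd_finrank_of_dvd_differentIdeal
    ((UniqueFactorizationMonoid.pow_dvd_pow_iff_dvd Module.finrank_pos.ne').1 hpow)

end Dedekind

section NumberField

variable {K : Type*} [Field K] [NumberField K]

attribute [local instance] FractionRing.liftAlgebra in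
lemma dvd_finrank_of_pow_dvd_natAbs_discr [IsGalois ℚ K] {a : ℕ}
    (h : a ^ Module.finrank ℚ K ∣ (discr K).natAbs) : a ∣ Module.finrank ℚ K := by
  have : IsGalois (FractionRing ℤ) (FractionRing (𝓞 K)) :=
    .of_equiv_equiv (f := (FractionRing.algEquiv ℤ ℚ).symm.toRingEquiv)
      (g := (FractionRing.algEquiv (𝓞 K) K).symm.toRingEquiv) <| RingHom.ext <|
        IsFractionRing.algEquiv_commutes (FractionRing.algEquiv ℤ ℚ).symm
          (FractionRing.algEquiv (𝓞 K) K).symm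
  rw [← RingOfIntegers.rank] at h ⊢
  rw [← Int.natCast_dvd_natCast]
  apply dvd_finrank_of_pow_dvd_relNorm_differentIdeal
  rw [Ideal.relNorm_int, absNorm_differentIdeal K, Ideal.span_singleton_pow,
    Ideal.dvd_span_singleton, Ideal.mem_span_singleton]
  exact_mod_cast h

variable (K) in
lemma natAbs_discr_dvd_natRadical_pow_mul_finrank_pow [IsGalois ℚ K] :
    (discr K).natAbs ∣ natRadical (discr K).natAbs ^ (Module.finrank ℚ K - 1) *
      Module.finrank ℚ K ^ Module.finrank ℚ K :=
  (dvd_natRadical_pow_mul_floorRoot_pow Module.finrank_pos.ne' _).trans <|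
    mul_dvd_mul_left _ <| pow_dvd_pow_of_dvd
      (dvd_finrank_of_pow_dvd_natAbs_discr Nat.floorRoot_pow_dvd) _

lemma three_pow_finrank_le_natAbs_discr_sq (hK : 1 < Module.finrank ℚ K) :
    3 ^ Module.finrank ℚ K ≤ (discr K).natAbs ^ 2 := by
  rcases Nat.lt_or_eq_of_le hK with hn | hn
  · rw [← Nat.cast_le (α := ℝ), Nat.cast_pow, Nat.cast_pow, Nat.cast_natAbs]
    calc (3 : ℝ) ^ Module.finrank ℚ K
        ≤ (4 / 9 * (3 * Real.pi / 4) ^ Module.finrank ℚ K) ^ 2 :=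
          three_pow_le_four_ninths_mul_pow_sq hn
      _ ≤ (|discr K| : ℤ) ^ 2 := by
          gcongr
          exact abs_discr_ge hK
  · have hd : 3 ≤ (discr K).natAbs := by
      zify
      exact abs_discr_gt_two hK
    rw [← hn]
    exact Nat.pow_le_pow_left hd 2

end NumberField

/-- For a nontrivial finite Galois extension `K/ℚ`,
`((1/2) log 3)·[K:ℚ] ≤ log d_K ≤ ([K:ℚ] − 1)·log rad(d_K) + [K:ℚ]·log [K:ℚ]`,
where `d_K` is the absolute value of the discriminant of `K`. -/
theorem stmt_1 (K : Type*) [Field K] [NumberField K] [IsGalois ℚ K]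
    (hK : 2 ≤ Module.finrank ℚ K) :
    (1 / 2 * Real.log 3) * (Module.finrank ℚ K : ℝ)
        ≤ Real.log ((NumberField.discr K).natAbs : ℝ) ∧
    Real.log ((NumberField.discr K).natAbs : ℝ)
        ≤ ((Module.finrank ℚ K : ℝ) - 1) * Real.log (natRadical (NumberField.discr K).natAbs : ℝ)
            + (Module.finrank ℚ K : ℝ) * Real.log (Module.finrank ℚ K : ℝ) := by
  have hdvd := natAbs_discr_dvd_natRadical_pow_mul_finrank_pow K
  have hrad : 0 < natRadical (discr K).natAbs := natRadical_pos _
  have hn : 0 < Module.finrank ℚ K := Module.finrank_pos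
  have hd : 0 < (discr K).natAbs := Int.natAbs_pos.2 (discr_ne_zero K)
  have hlower : (3 : ℝ) ^ Module.finrank ℚ K ≤ ((discr K).natAbs : ℝ) ^ 2 :=
    mod_cast three_pow_finrank_le_natAbs_discr_sq hK
  have hupper : ((discr K).natAbs : ℝ) ≤ (natRadical (discr K).natAbs : ℝ) ^
      (Module.finrank ℚ K - 1) * (Module.finrank ℚ K : ℝ) ^ Module.finrank ℚ K :=
    mod_cast Nat.le_of_dvd (by positivity) hdvd
  constructor
  · have hlog := Real.log_le_log (by positivity) hlower
    rw [Real.log_pow, Real.log_pow, Nat.cast_ofNat] at hlog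
    linarith
  · have hlog := Real.log_le_log (by positivity) hupper
    rwa [Real.log_mul (by positivity) (by positivity), Real.log_pow, Real.log_pow,
      Nat.cast_pred hn] at hlog
end

section
/- Let ℓ be an odd prime and let G be a subgroup of GL₂(𝔽_ℓ). Then at least one of the following holds: (1) G contains SL₂(𝔽_ℓ); (2) G is conjugate to a subgroup of the Borel subgroup ℬ(ℓ) of upper triangular matrices; (3) G is conjugate to a subgroup of the non-split Cartan subgroup 𝒞_ns(ℓ); (4) G is conjugate to a subgroup of the normalizer 𝒞_s⁺(ℓ) of the split Cartan subgroup but not to any subgroup of the split Cartan subgroup 𝒞_s(ℓ); (5) G is conjugate to a subgroup of the normalizer 𝒞_ns⁺(ℓ) of the non-split Cartan subgroup but not to any subgroup of 𝒞_ns(ℓ); or (6) the image of G in PGL₂(𝔽_ℓ) is isomorphic as a group to A₄, S₄, or A₅. -/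
open Matrix

/-- The Borel subgroup of `GL₂(𝔽_ℓ)`: the invertible upper-triangular matrices. -/
def borelSubset (ℓ : ℕ) : Set (GL (Fin 2) (ZMod ℓ)) :=
  {g | (g : Matrix (Fin 2) (Fin 2) (ZMod ℓ)) 1 0 = 0}

/-- The split Cartan subgroup of `GL₂(𝔽_ℓ)`: the invertible diagonal matrices. -/
def splitCartan (ℓ : ℕ) : Set (GL (Fin 2) (ZMod ℓ)) :=
  {g | (g : Matrix (Fin 2) (Fin 2) (ZMod ℓ)) 0 1 = 0 ∧
       (g : Matrix (Fin 2) (Fin 2) (ZMod ℓ)) 1 0 = 0}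

/-- The non-split Cartan subgroup of `GL₂(𝔽_ℓ)` attached to a nonsquare `ε`:
the invertible matrices of the form `[[a, εc],[c, a]]`. -/
def nonsplitCartan (ℓ : ℕ) (ε : ZMod ℓ) : Set (GL (Fin 2) (ZMod ℓ)) :=
  {g | (g : Matrix (Fin 2) (Fin 2) (ZMod ℓ)) 1 1 = (g : Matrix (Fin 2) (Fin 2) (ZMod ℓ)) 0 0 ∧
       (g : Matrix (Fin 2) (Fin 2) (ZMod ℓ)) 0 1 = ε * (g : Matrix (Fin 2) (Fin 2) (ZMod ℓ)) 1 0}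

/-- `G` is conjugate (in `GL₂(𝔽_ℓ)`) to a subgroup of the set `S`. -/
def IsConjToSubgroupOf {ℓ : ℕ} (G : Subgroup (GL (Fin 2) (ZMod ℓ)))
    (S : Set (GL (Fin 2) (ZMod ℓ))) : Prop :=
  ∃ g : GL (Fin 2) (ZMod ℓ), ∀ x ∈ G, g * x * g⁻¹ ∈ S

/-!
A parabolic element of `G` has, up to conjugation, a power which is a nontrivial upper
transvection, and this generates the whole root group because `𝔽_ℓ` is a prime field. A group
containing that root group either fixes its line or contains the opposite root group as well, hence
all of `SL₂`.

Without parabolic elements, `G` acts by conjugation on the traceless matrices of square `1` or `ε`,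
and each of its non-scalar elements fixes exactly two of them, `A` and `-A`. Burnside's count on the
image of `G` in `PGL₂` is then the one for finite rotation groups of the sphere: if the `eᵢ` are the
orders of the stabilizers along the orbits and `n` is the order of the image, then
`∑ (1 - 1 / eᵢ) = 2 - 2 / n`. Either `(eᵢ)` is `(2, 3, 3)`, `(2, 3, 4)` or `(2, 3, 5)`, and the
image acts faithfully on its four Sylow `3`-subgroups or its five Sylow `2`-subgroups; or `(eᵢ)` is
`(n, n)` or `(2, 2, n / 2)`, and `G` preserves a pair `{A, -A}`, that is, normalizes the stabilizer
of `A`, a Cartan subgroup.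
-/

section SelfCentralizingSylow

variable {G : Type*} [Group G] {p : ℕ}

theorem mem_of_mem_ker_toPermHom_sylow {x : G} (hx : x ∈ (MulAction.toPermHom G (Sylow p G)).ker)
    (hxp : orderOf x = p) (Q : Sylow p G) : x ∈ Q := by
  have hQ : x ∈ Subgroup.normalizer (Q : Set G) :=
    Sylow.smul_eq_iff_mem_normalizer.1 (Equiv.congr_fun (MonoidHom.mem_ker.1 hx) Q)
  have hgrp : IsPGroup p (Subgroup.zpowers x) :=
    IsPGroup.of_card (n := 1) (by rw [Nat.card_zpowers, hxp, pow_one])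
  exact (hgrp.inf_normalizer_sylow Q ▸
    Subgroup.mem_inf.2 ⟨Subgroup.mem_zpowers x, hQ⟩ : x ∈ Subgroup.zpowers x ⊓ (Q : Subgroup G)).2

variable [Fact p.Prime]

theorem dvd_orderOf_of_mem_sylow (P : Sylow p G) {x : G} (hx : x ∈ P) (hx1 : x ≠ 1) :
    p ∣ orderOf x := by
  obtain ⟨k, hk⟩ := P.2 ⟨x, hx⟩
  have hdvd : orderOf x ∣ p ^ k :=
    orderOf_dvd_of_pow_eq_one (by simpa using congrArg Subtype.val hk)
  obtain ⟨j, -, hj⟩ := (Nat.dvd_prime_pow Fact.out).1 hdvd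
  rw [hj]
  refine dvd_pow_self p fun hj0 => hx1 ?_
  rwa [hj0, pow_zero, orderOf_eq_one_iff] at hj

theorem centralizer_singleton_eq_sylow (hp : ∀ x : G, p ∣ orderOf x → orderOf x = p)
    (P : Sylow p G) [IsMulCommutative P] {x : G} (hx : x ∈ P) (hx1 : x ≠ 1) :
    Subgroup.centralizer {x} = (P : Subgroup G) := by
  have hxp : orderOf x = p := hp x (dvd_orderOf_of_mem_sylow P hx hx1)
  refine P.3 (fun y => ⟨1, ?_⟩) fun y hy => ?_
  · have hxy : Commute x y := (Subgroup.mem_centralizer_singleton_iff.1 y.2).symm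
    refine Subtype.ext ?_
    rw [pow_one, SubgroupClass.coe_pow, OneMemClass.coe_one]
    by_cases hy : p ∣ orderOf (y : G)
    · rw [← hp y hy, pow_orderOf_eq_one]
    have hcop : (orderOf x).Coprime (orderOf (y : G)) := by
      rw [hxp]
      exact (Nat.Prime.coprime_iff_not_dvd Fact.out).2 hy
    have hmul := hxy.orderOf_mul_eq_mul_orderOf_of_coprime hcop
    rw [hp _ (hmul ▸ hxp ▸ dvd_mul_right _ _), hxp] at hmul
    have hy1 : orderOf (y : G) = 1 :=
      (Nat.eq_of_mul_eq_mul_left (Fact.out : p.Prime).pos (by rw [mul_one, ← hmul]) : 1 = _).symm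
    rw [orderOf_eq_one_iff.1 hy1, one_pow]
  · exact Subgroup.mem_centralizer_singleton_iff.2
      (setLike_mul_comm (s := (P : Subgroup G)) hy hx)

theorem mem_sylow_of_commute (hp : ∀ x : G, p ∣ orderOf x → orderOf x = p)
    (P : Sylow p G) [IsMulCommutative P] {x y : G} (hx : x ∈ P) (hx1 : x ≠ 1)
    (hyx : y * x = x * y) : y ∈ P := by
  change y ∈ (P : Subgroup G)
  rwa [← centralizer_singleton_eq_sylow hp P hx hx1, Subgroup.mem_centralizer_singleton_iff]

theorem card_normalizer_sylow_le [Finite G] (hp : ∀ x : G, p ∣ orderOf x → orderOf x = p)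
    (P : Sylow p G) [IsMulCommutative P] (hP : (P : Subgroup G) ≠ ⊥) :
    Nat.card (Subgroup.normalizer (P : Set G)) ≤ (Nat.card P - 1) * Nat.card P := by
  obtain ⟨x, hx, hx1⟩ := P.1.bot_or_exists_ne_one.resolve_left hP
  let : MulAction (Subgroup.normalizer (P : Set G)) (P : Subgroup G) :=
    MulAction.compHom _ (P : Subgroup G).normalizerMonoidHom
  let y : (P : Subgroup G) := ⟨x, hx⟩
  rw [← Nat.card_congr
    (MulAction.orbitProdStabilizerEquivGroup (Subgroup.normalizer (P : Set G)) y),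
    Nat.card_prod]
  gcongr
  · have horbit : MulAction.orbit (Subgroup.normalizer (P : Set G)) y ⊆ {1}ᶜ := by
      rintro _ ⟨g, rfl⟩ hg
      exact hx1 (congrArg Subtype.val ((map_eq_one_iff _ (MulEquiv.injective _)).1 hg))
    refine (Set.ncard_le_ncard horbit).trans_eq ?_
    rw [Set.ncard_compl, Set.ncard_singleton]
  · refine Nat.card_le_card_of_injective
      (fun g : MulAction.stabilizer _ y => (⟨g.1.1, ?_⟩ : (P : Subgroup G))) fun g h hgh => ?_
    · exact mem_sylow_of_commute hp P hx hx1 (mul_inv_eq_iff_eq_mul.1 (congrArg Subtype.val g.2))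
    · exact Subtype.ext (Subtype.ext (Subtype.mk.inj hgh))

theorem toPermHom_sylow_injective [Finite G] (hp : ∀ x : G, p ∣ orderOf x → orderOf x = p)
    [∀ P : Sylow p G, IsMulCommutative P] [Nontrivial (Sylow p G)] :
    Function.Injective (MulAction.toPermHom G (Sylow p G)) := by
  set K := (MulAction.toPermHom G (Sylow p G)).ker
  obtain ⟨P, Q, hPQ⟩ := exists_pair_ne (Sylow p G)
  have hdisj : ∀ x ∈ K, x ∈ P → x = 1 := fun x hxK hxP => by
    by_contra hx1
    have hxp := hp x (dvd_orderOf_of_mem_sylow P hxP hx1)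
    refine hPQ (Sylow.ext ?_)
    rw [← centralizer_singleton_eq_sylow hp P hxP hx1,
      centralizer_singleton_eq_sylow hp Q (mem_of_mem_ker_toPermHom_sylow hxK hxp Q) hx1]
  have hPbot : (P : Subgroup G) ≠ ⊥ := fun h => hPQ (Sylow.ext (P.3 Q.2 (h ▸ bot_le)).symm)
  obtain ⟨t, htP, ht1⟩ := P.1.bot_or_exists_ne_one.resolve_left hPbot
  refine (injective_iff_map_eq_one _).2 fun x hxK => hdisj x hxK ?_
  have hxN : x ∈ Subgroup.normalizer (P : Set G) :=
    Sylow.smul_eq_iff_mem_normalizer.1 (Equiv.congr_fun hxK P)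
  -- `K` and `P` normalize each other, so the commutator of `x` and `t` lies in `K ∩ P`.
  have hcomm : x * t * x⁻¹ * t⁻¹ = 1 := by
    refine hdisj _ ?_ (mul_mem ((Subgroup.mem_set_normalizer_iff.1 hxN t).1 htP) (inv_mem htP))
    rw [mul_assoc, mul_assoc, ← mul_assoc t]
    exact mul_mem hxK ((MonoidHom.normal_ker _).conj_mem _ (inv_mem hxK) t)
  exact mem_sylow_of_commute hp P htP ht1 (mul_inv_eq_iff_eq_mul.1 (mul_inv_eq_one.1 hcomm))

end SelfCentralizingSylow

section PermutationRepresentations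

variable {G α : Type*} [Group G] [Finite α] {m : ℕ}

theorem nonempty_mulEquiv_perm_of_injective (f : G →* Equiv.Perm α) (hf : Function.Injective f)
    (hα : Nat.card α = m) (hG : Nat.card G = m.factorial) :
    Nonempty (G ≃* Equiv.Perm (Fin m)) := by
  subst hα
  let F := (Finite.equivFin α).permCongrHom.toMonoidHom.comp f
  have hF : Function.Injective F := (Finite.equivFin α).permCongrHom.injective.comp hf
  exact ⟨MulEquiv.ofBijective F
    ((Nat.bijective_iff_injective_and_card F).2 ⟨hF, by rw [hG, Nat.card_perm, Nat.card_fin]⟩)⟩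

theorem nonempty_mulEquiv_alternatingGroup_of_injective (f : G →* Equiv.Perm α)
    (hf : Function.Injective f) (hα : Nat.card α = m) (hG : 2 * Nat.card G = m.factorial) :
    Nonempty (G ≃* alternatingGroup (Fin m)) := by
  subst hα
  let F := (Finite.equivFin α).permCongrHom.toMonoidHom.comp f
  have hF : Function.Injective F := (Finite.equivFin α).permCongrHom.injective.comp hf
  have hindex : F.range.index = 2 := by
    refine Nat.eq_of_mul_eq_mul_right (Nat.card_pos (α := F.range)) ?_
    rw [F.range.index_mul_card, Nat.card_perm, Nat.card_fin, ← hG,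
      Nat.card_congr (MonoidHom.ofInjective hF).toEquiv]
  exact ⟨(MonoidHom.ofInjective hF).trans
    (MulEquiv.subgroupCongr (Equiv.Perm.eq_alternatingGroup_of_index_eq_two hindex))⟩

end PermutationRepresentations

section PolyhedralGroups

variable {G : Type*} [Group G] [Finite G]

theorem card_sylow_eq_pow {p k m : ℕ} [Fact p.Prime] (hm : ¬ p ∣ m) (hG : Nat.card G = p ^ k * m)
    (P : Sylow p G) : Nat.card P = p ^ k := by
  have hp : p.Prime := Fact.out
  have hm0 : m ≠ 0 := fun h => hm (h ▸ dvd_zero p)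
  rw [P.card_eq_multiplicity, hG, Nat.factorization_mul (pow_ne_zero k hp.ne_zero) hm0]
  simp [hp.factorization_self, Nat.factorization_eq_zero_of_not_dvd hm]

theorem card_sylow_mul_card_normalizer {p : ℕ} [Fact p.Prime] (P : Sylow p G) :
    Nat.card (Sylow p G) * Nat.card (Subgroup.normalizer (P : Set G)) = Nat.card G := by
  rw [P.card_eq_index_normalizer, Subgroup.index_mul_card]

theorem card_sylow_three_of_card (hG : Nat.card G = 12 ∨ Nat.card G = 24) (P : Sylow 3 G) :
    Nat.card P = 3 := by
  rcases hG with hG | hG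
  · exact card_sylow_eq_pow (k := 1) (m := 4) (by norm_num) hG P
  · exact card_sylow_eq_pow (k := 1) (m := 8) (by norm_num) hG P

theorem natCard_sylow_three_eq_four (hG : Nat.card G = 12 ∨ Nat.card G = 24)
    (h3 : ∀ x : G, 3 ∣ orderOf x → orderOf x = 3) : Nat.card (Sylow 3 G) = 4 := by
  let P : Sylow 3 G := default
  have hP : Nat.card P = 3 := card_sylow_three_of_card hG P
  have hPbot : (P : Subgroup G) ≠ ⊥ := fun h => by simp [h] at hP
  have : IsCyclic P := isCyclic_of_prime_card hP
  set N := Subgroup.normalizer (P : Set G)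
  have hle : Nat.card N ≤ (Nat.card P - 1) * Nat.card P := card_normalizer_sylow_le h3 P hPbot
  have hdvd : Nat.card P ∣ Nat.card N := Subgroup.card_dvd_of_le Subgroup.le_normalizer
  have hpos : 0 < Nat.card N := Nat.card_pos
  rw [hP] at hle hdvd
  have hmul : Nat.card (Sylow 3 G) * Nat.card N = Nat.card G := card_sylow_mul_card_normalizer P
  have hmod : Nat.card (Sylow 3 G) % 3 = 1 := card_sylow_modEq_one 3 G
  have hN : Nat.card N = 3 ∨ Nat.card N = 6 := by omega
  rcases hN with hN | hN <;> rw [hN] at hmul <;> omega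

theorem toPermHom_sylow_three_injective (hG : Nat.card G = 12 ∨ Nat.card G = 24)
    (h3 : ∀ x : G, 3 ∣ orderOf x → orderOf x = 3) :
    Function.Injective (MulAction.toPermHom G (Sylow 3 G)) := by
  have : Nontrivial (Sylow 3 G) := by
    rw [← Finite.one_lt_card_iff_nontrivial, natCard_sylow_three_eq_four hG h3]
    norm_num
  have (P : Sylow 3 G) : IsCyclic P := isCyclic_of_prime_card (card_sylow_three_of_card hG P)
  exact toPermHom_sylow_injective h3

theorem nonempty_mulEquiv_alternatingGroup_four (hG : Nat.card G = 12)
    (h3 : ∀ x : G, 3 ∣ orderOf x → orderOf x = 3) :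
    Nonempty (G ≃* alternatingGroup (Fin 4)) :=
  nonempty_mulEquiv_alternatingGroup_of_injective _
    (toPermHom_sylow_three_injective (Or.inl hG) h3) (natCard_sylow_three_eq_four (Or.inl hG) h3)
    (by rw [hG]; rfl)

theorem nonempty_mulEquiv_perm_four (hG : Nat.card G = 24)
    (h3 : ∀ x : G, 3 ∣ orderOf x → orderOf x = 3) :
    Nonempty (G ≃* Equiv.Perm (Fin 4)) :=
  nonempty_mulEquiv_perm_of_injective _
    (toPermHom_sylow_three_injective (Or.inr hG) h3) (natCard_sylow_three_eq_four (Or.inr hG) h3)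
    (by rw [hG]; rfl)

theorem card_sylow_le_two_of_normalizer_le {p : ℕ} [Fact p.Prime] (P : Sylow p G)
    [IsMulCommutative P] (hN : Subgroup.normalizer (P : Set G) ≤ P)
    (hconj : ∀ t ∈ P, ∀ u ∈ P, t ≠ 1 → u ≠ 1 → IsConj t u) : Nat.card P ≤ 2 := by
  by_contra! hcard
  obtain ⟨t, u, ht1, hu1, htu⟩ : ∃ t u : P, t ≠ 1 ∧ u ≠ 1 ∧ t ≠ u := by
    have hcompl : 1 < ({1}ᶜ : Set P).ncard := by
      rw [Set.ncard_compl, Set.ncard_singleton]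
      omega
    obtain ⟨t, u, ht, hu, htu⟩ := (Set.one_lt_ncard_iff).1 hcompl
    exact ⟨t, u, ht, hu, htu⟩
  obtain ⟨c, hc⟩ := isConj_iff.1 (hconj u u.2 t t.2 (by simpa using hu1) (by simpa using ht1))
  obtain ⟨n, hnN, hn⟩ := P.conj_eq_normalizer_conj_of_mem u c⁻¹ u.2 (by simp [hc])
  have hcomm : n * u = u * n := setLike_mul_comm (s := (P : Subgroup G)) (hN hnN) u.2
  rw [inv_inv, hc, mul_assoc, ← hcomm, inv_mul_cancel_left] at hn
  exact htu (Subtype.ext hn)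

theorem natCard_sylow_two_eq_five (hG : Nat.card G = 60)
    (h2 : ∀ x : G, 2 ∣ orderOf x → orderOf x = 2)
    (hconj : ∀ t u : G, orderOf t = 2 → orderOf u = 2 → IsConj t u) :
    Nat.card (Sylow 2 G) = 5 := by
  let P : Sylow 2 G := default
  have hP : Nat.card P = 4 := card_sylow_eq_pow (k := 2) (m := 15) (by norm_num) hG P
  have : IsMulCommutative P := IsPGroup.isMulCommutative_of_card_eq_prime_sq (p := 2) hP
  have hPbot : (P : Subgroup G) ≠ ⊥ := fun h => by simp [h] at hP
  set N := Subgroup.normalizer (P : Set G)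
  have hle : Nat.card N ≤ (Nat.card P - 1) * Nat.card P := card_normalizer_sylow_le h2 P hPbot
  have hPN : (P : Subgroup G) ≤ N := Subgroup.le_normalizer
  have hdvd : Nat.card P ∣ Nat.card N := Subgroup.card_dvd_of_le hPN
  have hpos : 0 < Nat.card N := Nat.card_pos
  rw [hP] at hle hdvd
  have hmul : Nat.card (Sylow 2 G) * Nat.card N = Nat.card G := card_sylow_mul_card_normalizer P
  have hne : Nat.card N ≠ 4 := fun hN4 => by
    have hNP : (P : Subgroup G) = N := Subgroup.eq_of_le_of_card_ge hPN (hN4.trans hP.symm).le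
    have := card_sylow_le_two_of_normalizer_le P hNP.ge fun t ht u hu ht1 hu1 =>
      hconj t u (h2 t (dvd_orderOf_of_mem_sylow P ht ht1))
        (h2 u (dvd_orderOf_of_mem_sylow P hu hu1))
    omega
  have hN : Nat.card N = 8 ∨ Nat.card N = 12 := by omega
  rcases hN with hN | hN <;> rw [hN] at hmul <;> omega

theorem nonempty_mulEquiv_alternatingGroup_five (hG : Nat.card G = 60)
    (h2 : ∀ x : G, 2 ∣ orderOf x → orderOf x = 2)
    (hconj : ∀ t u : G, orderOf t = 2 → orderOf u = 2 → IsConj t u) :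
    Nonempty (G ≃* alternatingGroup (Fin 5)) := by
  have hcard := natCard_sylow_two_eq_five hG h2 hconj
  have : Nontrivial (Sylow 2 G) := Finite.one_lt_card_iff_nontrivial.1 (by omega)
  have (P : Sylow 2 G) : IsMulCommutative P :=
    IsPGroup.isMulCommutative_of_card_eq_prime_sq
      (card_sylow_eq_pow (k := 2) (m := 15) (by norm_num) hG P)
  exact nonempty_mulEquiv_alternatingGroup_of_injective _ (toPermHom_sylow_injective h2) hcard
    (by rw [hG]; rfl)

end PolyhedralGroups

section OrbitWeights

theorem eq_and_eq_of_one_div_add_one_div {n a b : ℕ} (ha : 0 < a) (hb : 0 < b) (han : a ≤ n)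
    (hbn : b ≤ n) (h : (1 / a + 1 / b : ℚ) = 2 / n) : a = n ∧ b = n := by
  have hn : 0 < n := ha.trans_le han
  have hna : (1 / n : ℚ) ≤ 1 / a := by gcongr
  have hnb : (1 / n : ℚ) ≤ 1 / b := by gcongr
  have hsplit : (2 / n : ℚ) = 1 / n + 1 / n := by ring
  have hae : (1 / a : ℚ) = 1 / n := by linarith
  have hbe : (1 / b : ℚ) = 1 / n := by linarith
  field_simp at hae hbe
  exact ⟨mod_cast hae.symm, mod_cast hbe.symm⟩

theorem spherical_triple_cases {n a b c : ℕ} (hn : 0 < n) (ha : 2 ≤ a) (hab : a ≤ b) (hbc : b ≤ c)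
    (h : (1 / a + 1 / b + 1 / c : ℚ) = 1 + 2 / n) :
    a = 2 ∧ (b = 2 ∧ n = 2 * c ∨
      b = 3 ∧ (c = 3 ∧ n = 12 ∨ c = 4 ∧ n = 24 ∨ c = 5 ∧ n = 60)) := by
  have hpos : (0 : ℚ) < 2 / n := by positivity
  have one_div_le {k m : ℕ} (hk : 0 < k) (hkm : k ≤ m) : (1 / m : ℚ) ≤ 1 / k := by gcongr
  have hba := one_div_le (by omega) hab
  have hcb := one_div_le (by omega) hbc
  have ha2 : a = 2 := by
    by_contra hne
    have := one_div_le three_pos (show 3 ≤ a by omega)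
    push_cast at this
    linarith
  subst ha2
  have hb4 : b < 4 := by
    by_contra! hb
    have := one_div_le four_pos hb
    push_cast at this h
    linarith
  have hc6 : b = 3 → c < 6 := by
    rintro rfl
    by_contra! hc
    have := one_div_le (by norm_num) hc
    push_cast at this h
    linarith
  have hc0 : 0 < c := by omega
  refine ⟨rfl, ?_⟩
  interval_cases b
  · left
    push_cast at h
    have hnc : (1 / c : ℚ) = 2 / n := by linarith
    field_simp at hnc
    exact ⟨rfl, by exact_mod_cast (by linarith : (n : ℚ) = 2 * c)⟩
  · right
    refine ⟨rfl, ?_⟩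
    have := hc6 rfl
    interval_cases c <;> field_simp at h <;> norm_cast at h <;> omega

variable {Ω : Type*}

theorem exists_eq_insert_le_le_of_card_eq_three [DecidableEq Ω] (e : Ω → ℕ) {S : Finset Ω}
    (hS : S.card = 3) :
    ∃ a b c, S = {a, b, c} ∧ a ≠ b ∧ a ≠ c ∧ b ≠ c ∧ e a ≤ e b ∧ e b ≤ e c := by
  obtain ⟨a, ha, hmin⟩ := S.exists_min_image e (Finset.card_pos.1 (by omega))
  obtain ⟨b, c, hbc, hT⟩ := Finset.card_eq_two.1
    (show (S.erase a).card = 2 by rw [Finset.card_erase_of_mem ha, hS])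
  have hSabc : S = {a, b, c} := by rw [← hT, Finset.insert_erase ha]
  have hab : a ≠ b := by rintro rfl; simpa using Finset.ext_iff.1 hT a
  have hac : a ≠ c := by rintro rfl; simpa using Finset.ext_iff.1 hT a
  rcases le_total (e b) (e c) with h | h
  · exact ⟨a, b, c, hSabc, hab, hac, hbc, hmin b (by simp [hSabc]), h⟩
  · exact ⟨a, c, b, by rw [hSabc, Finset.pair_comm], hac, hab, hbc.symm,
      hmin c (by simp [hSabc]), h⟩

variable [Fintype Ω] {n : ℕ} {e : Ω → ℕ}

theorem card_filter_ne_one_eq_two_or_three (hn : 2 ≤ n) (he : ∀ ω, 0 < e ω)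
    (hen : ∀ ω, e ω ≤ n) (hsum : ∑ ω with e ω ≠ 1, (1 - 1 / (e ω : ℚ)) = 2 - 2 / n) :
    Finset.card {ω | e ω ≠ 1} = 2 ∨ Finset.card {ω | e ω ≠ 1} = 3 := by
  set S : Finset Ω := {ω | e ω ≠ 1}
  have hlower : S.card • (1 / 2 : ℚ) ≤ 2 - 2 / n := by
    refine hsum ▸ S.card_nsmul_le_sum _ _ fun ω hω => ?_
    have h2 : 2 ≤ e ω := by have := he ω; have := (Finset.mem_filter.1 hω).2; omega
    have : (1 / e ω : ℚ) ≤ 1 / 2 := by gcongr; exact_mod_cast h2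
    linarith
  have hupper : 2 - 2 / n ≤ S.card • (1 - 1 / n : ℚ) := by
    refine hsum ▸ S.sum_le_card_nsmul _ _ fun ω _ => ?_
    have h0 := he ω
    have hn := hen ω
    gcongr
  have hpos : (0 : ℚ) < 1 / n := by positivity
  have htwo : (2 / n : ℚ) = 2 * (1 / n) := by ring
  have hhalf : (1 / n : ℚ) ≤ 1 / 2 := by gcongr; exact_mod_cast hn
  rw [nsmul_eq_mul] at hlower hupper
  have hlt : S.card < 4 := by exact_mod_cast (by linarith : (S.card : ℚ) < 4)
  have hgt : 1 < S.card := by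
    by_contra! hle
    have : (S.card : ℚ) ≤ 1 := by exact_mod_cast hle
    nlinarith
  omega

theorem orbit_weights_cases (hn : 2 ≤ n) (he : ∀ ω, 0 < e ω) (hen : ∀ ω, e ω ≤ n)
    (hsum : ∑ ω, (1 - 1 / (e ω : ℚ)) = 2 - 2 / n) :
    (∃ a b, a ≠ b ∧ e a = n ∧ e b = n) ∨ (∃ a, 2 ≤ e a ∧ n = 2 * e a) ∨
      ((n = 12 ∨ n = 24) ∧ ∀ ω, 3 ∣ e ω → e ω = 3) ∨
      (n = 60 ∧ ∃ a, e a = 2 ∧ ∀ ω, 2 ∣ e ω → ω = a) := by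
  classical
  have hsum' : ∑ ω with e ω ≠ 1, (1 - 1 / (e ω : ℚ)) = 2 - 2 / n := by
    rw [← hsum]
    refine Finset.sum_subset (Finset.subset_univ _) fun ω _ hω => ?_
    have he1 : e ω = 1 := by simpa using hω
    simp [he1]
  rcases card_filter_ne_one_eq_two_or_three hn he hen hsum' with hS | hS
  · obtain ⟨a, b, hab, hS⟩ := Finset.card_eq_two.1 hS
    rw [hS, Finset.sum_pair hab] at hsum'
    have := eq_and_eq_of_one_div_add_one_div (he a) (he b) (hen a) (hen b) (by linarith)
    exact Or.inl ⟨a, b, hab, this⟩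
  obtain ⟨a, b, c, hS, hab, hac, hbc, hle, hle'⟩ :=
    exists_eq_insert_le_le_of_card_eq_three e hS
  rw [hS, Finset.sum_insert (by simp [hab, hac]), Finset.sum_pair hbc] at hsum'
  have hmem (ω : Ω) : e ω ≠ 1 ↔ ω = a ∨ ω = b ∨ ω = c := by
    simpa using Finset.ext_iff.1 hS ω
  have ha2 : 2 ≤ e a := by have := he a; have := (hmem a).2 (Or.inl rfl); omega
  obtain ⟨ha, h | ⟨hb, h⟩⟩ := spherical_triple_cases (by omega : 0 < n) ha2 hle hle' (by linarith)
  · exact Or.inr (Or.inl ⟨c, by omega, h.2⟩)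
  have hcases (ω : Ω) : e ω = 1 ∨ ω = a ∨ e ω = 3 ∨ e ω = e c := by
    by_cases h1 : e ω = 1
    · exact Or.inl h1
    · rcases (hmem ω).1 h1 with rfl | rfl | rfl <;> simp [hb]
  right; right
  rcases h with ⟨hc, h⟩ | ⟨hc, h⟩ | ⟨hc, h⟩
  · exact Or.inl ⟨Or.inl h, fun ω hω => by rcases hcases ω with h | rfl | h | h <;> omega⟩
  · exact Or.inl ⟨Or.inr h, fun ω hω => by rcases hcases ω with h | rfl | h | h <;> omega⟩
  · refine Or.inr ⟨h, a, ha, fun ω hω => ?_⟩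
    rcases hcases ω with h | h | h | h <;> first | exact h | omega

end OrbitWeights

section TwoFixedPoints

open MulAction

variable {G X : Type*} [Group G] [MulAction G X]

theorem natCard_eq_sum_card_div_card_stabilizer [Finite G] [Finite X]
    [Fintype (orbitRel.Quotient G X)] :
    (Nat.card X : ℚ) =
      ∑ ω : orbitRel.Quotient G X, (Nat.card G : ℚ) / Nat.card (stabilizer G ω.out) := by
  rw [Nat.card_congr (selfEquivSigmaOrbitsQuotientStabilizer G X), Nat.card_sigma, Nat.cast_sum]
  refine Finset.sum_congr rfl fun ω _ => ?_
  have hpos : (0 : ℚ) < Nat.card (stabilizer G ω.out) := by exact_mod_cast Nat.card_pos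
  rw [eq_div_iff hpos.ne', ← (stabilizer G ω.out).index_mul_card, Nat.cast_mul]
  rfl

theorem natCard_add_two_mul_eq_card_orbits_mul [Finite G] [Finite X]
    (hfix : ∀ g : G, g ≠ 1 → (fixedBy X g).ncard = 2) :
    Nat.card X + (Nat.card G - 1) * 2 = Nat.card (orbitRel.Quotient G X) * Nat.card G := by
  classical
  have := Fintype.ofFinite G
  have := Fintype.ofFinite X
  have := Fintype.ofFinite (orbitRel.Quotient G X)
  have hburnside := sum_card_fixedBy_eq_card_orbits_mul_card_group G X
  rw [← Finset.add_sum_erase _ _ (Finset.mem_univ (1 : G)),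
    Finset.sum_const_nat (m := 2)] at hburnside
  · rw [Finset.card_erase_of_mem (Finset.mem_univ _), Finset.card_univ] at hburnside
    simpa only [← Nat.card_eq_fintype_card, fixedBy_one_eq_univ, Nat.card_univ] using hburnside
  · intro g hg
    rw [← hfix g (Finset.ne_of_mem_erase hg), ← Nat.card_eq_fintype_card, Nat.card_coe_set_eq]

theorem sum_one_sub_one_div_card_stabilizer [Finite G] [Finite X]
    [Fintype (orbitRel.Quotient G X)] (hfix : ∀ g : G, g ≠ 1 → (fixedBy X g).ncard = 2) :
    ∑ ω : orbitRel.Quotient G X, (1 - 1 / (Nat.card (stabilizer G ω.out) : ℚ)) =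
      2 - 2 / Nat.card G := by
  have hpos : 0 < Nat.card G := Nat.card_pos
  have hcount : (Nat.card X + (Nat.card G - 1) * 2 : ℚ) =
      Nat.card (orbitRel.Quotient G X) * Nat.card G := by
    rw [← Nat.cast_pred hpos]
    exact_mod_cast natCard_add_two_mul_eq_card_orbits_mul hfix
  have hX : (Nat.card X : ℚ) = Nat.card G * ∑ ω : orbitRel.Quotient G X,
      1 / (Nat.card (stabilizer G ω.out) : ℚ) := by
    rw [natCard_eq_sum_card_div_card_stabilizer (G := G), Finset.mul_sum]
    exact Finset.sum_congr rfl fun _ _ => by rw [mul_one_div]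
  rw [hX] at hcount
  rw [Finset.sum_sub_distrib, Finset.sum_const, Finset.card_univ, nsmul_one,
    ← Nat.card_eq_fintype_card]
  field_simp
  linarith

theorem fixedBy_eq_pair {g : G} (hfix : (fixedBy X g).ncard = 2) {x y : X} (hxy : x ≠ y)
    (hx : x ∈ fixedBy X g) (hy : y ∈ fixedBy X g) : fixedBy X g = {x, y} :=
  (Set.eq_of_subset_of_ncard_le (Set.pair_subset hx hy) (by rw [hfix, Set.ncard_pair hxy])
    (Set.finite_of_ncard_ne_zero (by omega))).symm

theorem exists_forall_smul_mem_fixedBy_of_fixedPoints [Nontrivial G]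
    (hfix : ∀ g : G, g ≠ 1 → (fixedBy X g).ncard = 2) {x y : X} (hxy : x ≠ y)
    (hx : x ∈ fixedPoints G X) (hy : y ∈ fixedPoints G X) :
    ∃ h : G, h ≠ 1 ∧ ∀ g : G, ∀ z ∈ fixedBy X h, g • z ∈ fixedBy X h := by
  obtain ⟨h, hh⟩ := exists_ne (1 : G)
  refine ⟨h, hh, fun g z hz => ?_⟩
  rw [fixedBy_eq_pair (hfix h hh) hxy (hx h) (hy h)] at hz ⊢
  rcases hz with rfl | rfl
  · exact Or.inl (hx g)
  · exact Or.inr (hy g)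

theorem exists_forall_smul_mem_fixedBy_of_index_stabilizer
    (hfix : ∀ g : G, g ≠ 1 → (fixedBy X g).ncard = 2) {x : X} (hx : (stabilizer G x).index = 2)
    (hbot : stabilizer G x ≠ ⊥) :
    ∃ h : G, h ≠ 1 ∧ ∀ g : G, ∀ z ∈ fixedBy X h, g • z ∈ fixedBy X h := by
  have hnormal := Subgroup.normal_of_index_eq_two hx
  obtain ⟨h, hhx, hh⟩ := (stabilizer G x).bot_or_exists_ne_one.resolve_left hbot
  have horbit (g : G) : g • x ∈ fixedBy X h := by
    have hconj : g⁻¹ * h * g⁻¹⁻¹ ∈ stabilizer G x := hnormal.conj_mem h hhx g⁻¹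
    rw [mem_fixedBy, ← inv_smul_eq_iff, ← mul_smul, ← mul_smul]
    simpa only [inv_inv, mul_assoc, mem_stabilizer_iff] using hconj
  obtain ⟨k, hk⟩ : ∃ k, k ∉ stabilizer G x := by
    by_contra! hall
    rw [(Subgroup.eq_top_iff' _).2 hall, Subgroup.index_top] at hx
    omega
  refine ⟨h, hh, fun g z hz => ?_⟩
  rw [fixedBy_eq_pair (hfix h hh) (Ne.symm hk) (by simpa using horbit 1) (horbit k)] at hz
  rcases hz with rfl | rfl
  · exact horbit g
  · exact smul_smul g k x ▸ horbit (g * k)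

theorem orderOf_eq_of_dvd_orderOf {p : ℕ} (hp : p.Prime)
    (hfix : ∀ g : G, g ≠ 1 → (fixedBy X g).ncard = 2)
    (hstab : ∀ x : X, p ∣ Nat.card (stabilizer G x) → Nat.card (stabilizer G x) = p) {g : G}
    (hg : p ∣ orderOf g) : orderOf g = p := by
  have hg1 : g ≠ 1 := by
    rintro rfl
    exact hp.one_lt.ne' (Nat.dvd_one.1 (orderOf_one (G := G) ▸ hg))
  obtain ⟨x, hx⟩ := Set.nonempty_of_ncard_ne_zero (s := fixedBy X g) (by rw [hfix g hg1]; omega)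
  have hdvd := Subgroup.orderOf_dvd_natCard (stabilizer G x) hx
  exact Nat.dvd_antisymm (hstab x (hg.trans hdvd) ▸ hdvd) hg

theorem isConj_of_orderOf_eq_two
    (hfix : ∀ g : G, g ≠ 1 → (fixedBy X g).ncard = 2) {x₀ : X}
    (hx₀ : Nat.card (stabilizer G x₀) = 2)
    (horbit : ∀ x : X, 2 ∣ Nat.card (stabilizer G x) → x ∈ orbit G x₀) {t u : G}
    (ht : orderOf t = 2) (hu : orderOf u = 2) : IsConj t u := by
  obtain ⟨s, -, hs⟩ := (Nat.card_eq_two_iff' (1 : stabilizer G x₀)).1 hx₀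
  suffices h : ∀ v : G, orderOf v = 2 → IsConj v s from (h t ht).trans (h u hu).symm
  intro v hv
  have hv1 : v ≠ 1 := by rintro rfl; simp at hv
  obtain ⟨x, hx⟩ := Set.nonempty_of_ncard_ne_zero (s := fixedBy X v) (by rw [hfix v hv1]; omega)
  obtain ⟨g, rfl⟩ := horbit x (hv ▸ Subgroup.orderOf_dvd_natCard (stabilizer G x) hx)
  have hmem : g⁻¹ * v * g ∈ stabilizer G x₀ := by
    rw [mem_stabilizer_iff, mul_smul, mul_smul, inv_smul_eq_iff]
    exact hx
  refine isConj_iff.2 ⟨g⁻¹, ?_⟩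
  rw [inv_inv, ← hs ⟨g⁻¹ * v * g, hmem⟩ ?_]
  simpa [Subtype.ext_iff, mul_assoc, inv_mul_eq_one] using hv1

theorem card_stabilizer_out (x : X) :
    Nat.card (stabilizer G (Quotient.mk (orbitRel G X) x).out) = Nat.card (stabilizer G x) :=
  Nat.card_congr (stabilizerEquivStabilizerOfOrbitRel (Quotient.mk_out x)).toEquiv

/-- A group isomorphic to `A₄`, `S₄` or `A₅`, the rotation groups of the regular polyhedra. -/
def IsPolyhedral (G : Type*) [Group G] : Prop :=
  Nonempty (G ≃* alternatingGroup (Fin 4)) ∨ Nonempty (G ≃* Equiv.Perm (Fin 4)) ∨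
    Nonempty (G ≃* alternatingGroup (Fin 5))

theorem exists_forall_smul_mem_fixedBy_or_isPolyhedral [Finite G] [Nontrivial G] [Finite X]
    (hfix : ∀ g : G, g ≠ 1 → (fixedBy X g).ncard = 2) :
    (∃ h : G, h ≠ 1 ∧ ∀ g : G, ∀ z ∈ fixedBy X h, g • z ∈ fixedBy X h) ∨ IsPolyhedral G := by
  have := Fintype.ofFinite (orbitRel.Quotient G X)
  rcases orbit_weights_cases Finite.one_lt_card (fun ω => Nat.card_pos)
      (fun ω => Subgroup.card_le_card_group _) (sum_one_sub_one_div_card_stabilizer hfix)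
    with ⟨a, b, hab, ha, hb⟩ | ⟨a, ha, hG⟩ | ⟨hG, h3⟩ | ⟨hG, a, ha, h2⟩
  · have hfixed {ω : orbitRel.Quotient G X} (hω : Nat.card (stabilizer G ω.out) = Nat.card G) :
        ω.out ∈ fixedPoints G X := fun g =>
      (Subgroup.eq_top_iff' _).1 (Subgroup.eq_top_of_card_eq (stabilizer G ω.out) hω) g
    exact Or.inl (exists_forall_smul_mem_fixedBy_of_fixedPoints hfix
      (fun h => hab (Quotient.out_injective h)) (hfixed ha) (hfixed hb))
  · refine Or.inl (exists_forall_smul_mem_fixedBy_of_index_stabilizer hfix (x := a.out) ?_ ?_)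
    · exact Nat.eq_of_mul_eq_mul_right (by omega) ((stabilizer G a.out).index_mul_card.trans hG)
    · intro hbot
      simp [hbot] at ha
  · have hord (g : G) : 3 ∣ orderOf g → orderOf g = 3 := by
      refine orderOf_eq_of_dvd_orderOf Nat.prime_three hfix fun x hx => ?_
      rw [← card_stabilizer_out] at hx ⊢
      exact h3 _ hx
    rcases hG with hG | hG
    · exact Or.inr (Or.inl (nonempty_mulEquiv_alternatingGroup_four hG hord))
    · exact Or.inr (Or.inr (Or.inl (nonempty_mulEquiv_perm_four hG hord)))
  · have horbit (x : X) (hx : 2 ∣ Nat.card (stabilizer G x)) : x ∈ orbit G a.out := by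
      rw [← h2 _ (card_stabilizer_out (G := G) x ▸ hx)]
      exact orbitRel_apply.1 ((orbitRel G X).symm (Quotient.mk_out x))
    have hord (g : G) : 2 ∣ orderOf g → orderOf g = 2 := by
      refine orderOf_eq_of_dvd_orderOf Nat.prime_two hfix fun x hx => ?_
      rw [← card_stabilizer_out] at hx ⊢
      rw [h2 _ hx, ha]
    exact Or.inr (Or.inr (Or.inr (nonempty_mulEquiv_alternatingGroup_five hG hord fun t u =>
      isConj_of_orderOf_eq_two hfix ha horbit)))

theorem exists_forall_smul_mem_fixedBy_or_isPolyhedral_map_mk' [Finite G] [Finite X]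
    {N : Subgroup G} [N.Normal] (hN : ∀ g ∈ N, ∀ x : X, g • x = x) {H : Subgroup G}
    (hH : ¬ H ≤ N) (hfix : ∀ g ∈ H, g ∉ N → (fixedBy X g).ncard = 2) :
    (∃ h ∈ H, h ∉ N ∧ ∀ g ∈ H, ∀ z ∈ fixedBy X h, g • z ∈ fixedBy X h) ∨
      IsPolyhedral (H.map (QuotientGroup.mk' N)) := by
  let : MulAction (G ⧸ N) X := MulAction.compHom X
    (QuotientGroup.lift N (toPermHom G X) fun g hg => Equiv.ext (hN g hg))
  have hne {g : G} : (g : G ⧸ N) ≠ 1 ↔ g ∉ N := (QuotientGroup.eq_one_iff g).not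
  have : Nontrivial (H.map (QuotientGroup.mk' N)) := by
    obtain ⟨g, hg, hgN⟩ := SetLike.not_le_iff_exists.1 hH
    exact ⟨⟨⟨g, H.mem_map_of_mem _ hg⟩, 1, Subtype.coe_ne_coe.1 (hne.2 hgN)⟩⟩
  refine (exists_forall_smul_mem_fixedBy_or_isPolyhedral (X := X)
    (G := H.map (QuotientGroup.mk' N)) ?_).imp_left ?_
  · rintro ⟨-, g, hg, rfl⟩ hg1
    exact hfix g hg (hne.1 (Subtype.coe_ne_coe.2 hg1))
  · rintro ⟨⟨-, h, hh, rfl⟩, hh1, hinv⟩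
    exact ⟨h, hh, hne.1 (Subtype.coe_ne_coe.2 hh1),
      fun g hg => hinv ⟨g, H.mem_map_of_mem _ hg⟩⟩

end TwoFixedPoints

section TwoByTwoMatrices

open GeneralLinearGroup (mkOfDetNeZero)

variable {K : Type*} [Field K]

theorem exists_det_cyclic_ne_zero {A : Matrix (Fin 2) (Fin 2) K}
    (hA : A ∉ Set.range (scalar (Fin 2))) :
    ∃ v : Fin 2 → K, (of ![v, A *ᵥ v]).det ≠ 0 := by
  by_contra! hdet
  have h01 : A 0 1 = 0 := by simpa [det_fin_two] using hdet ![0, 1]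
  have h10 : A 1 0 = 0 := by simpa [det_fin_two] using hdet ![1, 0]
  have h11 : A 1 1 = A 0 0 := by
    simpa [det_fin_two, h01, h10, sub_eq_zero, mulVec, dotProduct] using hdet ![1, 1]
  refine hA ⟨A 0 0, ?_⟩
  ext i j
  fin_cases i <;> fin_cases j <;> simp [h01, h10, h11]

theorem exists_semiconjBy_companion {A : Matrix (Fin 2) (Fin 2) K}
    (hA : A ∉ Set.range (scalar (Fin 2))) :
    ∃ P : GL (Fin 2) K, SemiconjBy P.val !![0, -A.det; 1, A.trace] A := by
  obtain ⟨v, hv⟩ := exists_det_cyclic_ne_zero hA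
  refine ⟨mkOfDetNeZero (of ![v, A *ᵥ v])ᵀ (by rwa [det_transpose]), ?_⟩
  change (of ![v, A *ᵥ v])ᵀ * _ = A * (of ![v, A *ᵥ v])ᵀ
  ext i j
  fin_cases i <;> fin_cases j <;>
    simp only [mulVec_fin_two, det_fin_two, trace_fin_two, Fin.zero_eta, Fin.mk_one, mul_apply,
      transpose_apply, of_apply, cons_val', cons_val_zero, cons_val_one, cons_val_fin_one,
      Fin.sum_univ_two] <;>
    ring

theorem exists_semiconjBy_of_trace_eq_of_det_eq {A B : Matrix (Fin 2) (Fin 2) K}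
    (hA : A ∉ Set.range (scalar (Fin 2))) (hB : B ∉ Set.range (scalar (Fin 2)))
    (htrace : A.trace = B.trace) (hdet : A.det = B.det) :
    ∃ P : GL (Fin 2) K, SemiconjBy P.val A B := by
  obtain ⟨P, hP⟩ := exists_semiconjBy_companion hA
  obtain ⟨Q, hQ⟩ := exists_semiconjBy_companion hB
  rw [htrace, hdet] at hP
  exact ⟨Q * P⁻¹, hQ.mul_left hP.units_inv_symm_left⟩

theorem mul_add_mul_eq_scalar_trace {R : Type*} [CommRing R] {A B : Matrix (Fin 2) (Fin 2) R}
    (hA : A.trace = 0) (hB : B.trace = 0) : A * B + B * A = scalar (Fin 2) (A * B).trace := by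
  rw [trace_fin_two] at hA hB
  ext i j
  fin_cases i <;> fin_cases j <;>
    simp only [Fin.zero_eta, Fin.mk_one, Matrix.add_apply, mul_apply, Fin.sum_univ_two,
      trace_fin_two, scalar_apply, diagonal_apply, one_ne_zero, zero_ne_one, if_true, if_false]
  · linear_combination A 0 0 * hB - B 1 1 * hA
  · linear_combination A 0 1 * hB + B 0 1 * hA
  · linear_combination A 1 0 * hB + B 1 0 * hA
  · linear_combination B 1 1 * hA - A 0 0 * hB

theorem mul_self_eq_neg_det_smul_one {R : Type*} [CommRing R] {A : Matrix (Fin 2) (Fin 2) R}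
    (hA : A.trace = 0) : A * A = -A.det • 1 := by
  have hadj : A.adjugate = -A := by
    rw [trace_fin_two] at hA
    rw [adjugate_fin_two]
    ext i j
    fin_cases i <;> fin_cases j <;> simp [eq_neg_of_add_eq_zero_left hA]
  rw [neg_smul, ← mul_adjugate, hadj, mul_neg, neg_neg]

theorem exists_eq_smul_of_commute_of_trace_eq_zero [NeZero (2 : K)]
    {A B : Matrix (Fin 2) (Fin 2) K} (hA : A.trace = 0) (hB : B.trace = 0) (hdet : A.det ≠ 0)
    (h : Commute A B) : ∃ s : K, B = s • A := by
  have hAB : (2 : K) • (A * B) = (A * B).trace • 1 := by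
    rw [two_smul, smul_one_eq_diagonal]
    nth_rw 2 [h.eq]
    exact mul_add_mul_eq_scalar_trace hA hB
  refine ⟨(-2 * A.det)⁻¹ * (A * B).trace, ?_⟩
  rw [mul_smul, eq_inv_smul_iff₀ (mul_ne_zero (neg_ne_zero.2 two_ne_zero) hdet)]
  calc (-2 * A.det) • B = (2 : K) • (A * A * B) := by
        rw [mul_self_eq_neg_det_smul_one hA, smul_one_mul, smul_smul, neg_mul, mul_neg]
    _ = A * (2 : K) • (A * B) := by rw [mul_smul_comm, mul_assoc]
    _ = (A * B).trace • A := by rw [hAB, mul_smul_comm, mul_one]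

end TwoByTwoMatrices

section Transvections

open GeneralLinearGroup (upperRightHom)

variable {K : Type*} [Field K]

theorem mem_of_det_eq_one_of_transvection_mem {G : Subgroup (GL (Fin 2) K)}
    (hG : ∀ (i j : Fin 2) (h : i ≠ j) (t : K), (SpecialLinearGroup.transvection h t).toGL ∈ G)
    {x : GL (Fin 2) K} (hx : x.val.det = 1) : x ∈ G := by
  have hall : ∀ s : SpecialLinearGroup (Fin 2) K, s.toGL ∈ G :=
    SL2.transvection_induction (·.toGL ∈ G) hG fun _ _ hA hB => by
      rw [map_mul]
      exact G.mul_mem hA hB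
  convert hall ⟨x.val, hx⟩
  exact Units.ext rfl

theorem exists_mem_coe_eq_antidiagonal {G : Subgroup (GL (Fin 2) K)}
    (hG : ∀ t, upperRightHom t ∈ G) {g : GL (Fin 2) K} (hg : g ∈ G) (h : g 1 0 ≠ 0) :
    ∃ w ∈ G, ∃ b c : K, w.val = !![0, b; c, 0] := by
  refine ⟨_, G.mul_mem (G.mul_mem (hG (-(g 0 0 / g 1 0))) hg) (hG (-(g 1 1 / g 1 0))),
    g 0 1 - g 0 0 / g 1 0 * g 1 1, g 1 0, ?_⟩
  ext i j
  fin_cases i <;> fin_cases j <;>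
    simp only [GeneralLinearGroup.upperRightHom_apply, Units.val_mul, mul_apply, of_apply,
      cons_val', cons_val_zero, cons_val_one, cons_val_fin_one, Fin.sum_univ_two, Fin.zero_eta,
      Fin.mk_one] <;>
    field_simp <;> ring

theorem transvection_one_zero_mem {G : Subgroup (GL (Fin 2) K)}
    (hG : ∀ t, upperRightHom t ∈ G) {w : GL (Fin 2) K} (hw : w ∈ G) {b c : K}
    (hwval : w.val = !![0, b; c, 0]) (t : K) :
    (SpecialLinearGroup.transvection (one_ne_zero : (1 : Fin 2) ≠ 0) t).toGL ∈ G := by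
  have hdet : w.val.det ≠ 0 := w.isUnit.map detMonoidHom |>.ne_zero
  have hc : c ≠ 0 := by
    rintro rfl
    simp [hwval] at hdet
  have hconj : (SpecialLinearGroup.transvection (one_ne_zero : (1 : Fin 2) ≠ 0) t).toGL =
      w * upperRightHom (t * b / c) * w⁻¹ := by
    rw [eq_mul_inv_iff_mul_eq]
    refine Units.ext ?_
    ext i j
    fin_cases i <;> fin_cases j <;>
      simp [hwval, mul_apply, Fin.sum_univ_two, SpecialLinearGroup.transvection_coe, single, hc,
        mul_div_cancel₀]
  rw [hconj]
  exact G.mul_mem (G.mul_mem hw (hG _)) (G.inv_mem hw)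

theorem forall_mem_of_det_eq_one_or_forall_apply_one_zero_eq_zero {G : Subgroup (GL (Fin 2) K)}
    (hG : ∀ t, upperRightHom t ∈ G) :
    (∀ x : GL (Fin 2) K, x.val.det = 1 → x ∈ G) ∨ ∀ x ∈ G, x 1 0 = 0 := by
  refine or_iff_not_imp_right.2 fun hborel => ?_
  push Not at hborel
  obtain ⟨g, hg, hg10⟩ := hborel
  obtain ⟨w, hw, b, c, hwval⟩ := exists_mem_coe_eq_antidiagonal hG hg hg10
  refine fun x => mem_of_det_eq_one_of_transvection_mem fun i j hij t => ?_
  fin_cases i <;> fin_cases j <;>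
    simp only [ne_eq, not_true_eq_false, Fin.mk_one, Fin.zero_eta] at hij
  · convert hG t
    refine Units.ext ?_
    ext i j
    fin_cases i <;> fin_cases j <;> simp [SpecialLinearGroup.transvection_coe, single]
  · exact transvection_one_zero_mem hG hw hwval t

theorem exists_conj_eq_scalar_mul_upperRightHom [NeZero (2 : K)] {g : GL (Fin 2) K}
    (hg : g.IsParabolic) :
    ∃ (P : GL (Fin 2) K) (u : Kˣ),
      P * g * P⁻¹ = GeneralLinearGroup.scalar (Fin 2) u * upperRightHom 1 := by
  set u : Kˣ := Units.mk0 g.val.parabolicEigenvalue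
    (GeneralLinearGroup.parabolicEigenvalue_ne_zero hg) with hu
  have htwo : g.val.trace = u + u := by
    rw [hu, Units.val_mk0, parabolicEigenvalue, add_halves]
  have hdet : g.val.det = u ^ 2 := by
    have hdiscr := hg.2
    rw [discr_fin_two, htwo] at hdiscr
    exact mul_left_cancel₀ (mul_ne_zero two_ne_zero two_ne_zero) (by linear_combination -hdiscr)
  have hns : (GeneralLinearGroup.scalar (Fin 2) u * upperRightHom 1).val ∉
      Set.range (scalar (Fin 2)) := by
    rintro ⟨r, hr⟩
    exact u.ne_zero (by simpa [mul_apply] using (congrFun₂ hr 0 1).symm)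
  obtain ⟨P, hP⟩ := exists_semiconjBy_of_trace_eq_of_det_eq hg.1 hns
    (by simp [trace_fin_two, htwo]) (by rw [hdet]; simp [sq])
  exact ⟨P, u, mul_inv_eq_iff_eq_mul.2 (Units.ext hP.eq)⟩

theorem upperRightHom_mem_of_scalar_mul_upperRightHom_one_mem {ℓ : ℕ} [Fact ℓ.Prime]
    {G : Subgroup (GL (Fin 2) (ZMod ℓ))} {u : (ZMod ℓ)ˣ}
    (hG : GeneralLinearGroup.scalar (Fin 2) u * upperRightHom 1 ∈ G) (t : ZMod ℓ) :
    upperRightHom t ∈ G := by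
  have hpow : (GeneralLinearGroup.scalar (Fin 2) u * upperRightHom 1) ^ (ℓ - 1) =
      upperRightHom (-1 : ZMod ℓ) := by
    rw [Commute.mul_pow (GeneralLinearGroup.scalar_commute u _), ← map_pow,
      ZMod.units_pow_card_sub_one_eq_one, map_one, one_mul, ← AddChar.map_nsmul_eq_pow, nsmul_one,
      Nat.cast_pred (Fact.out : ℓ.Prime).pos, ZMod.natCast_self, zero_sub]
  have ht : t = (-t).val • (-1) := by
    rw [nsmul_eq_mul, ZMod.natCast_zmod_val, neg_mul_neg, mul_one]
  rw [ht, AddChar.map_nsmul_eq_pow, ← hpow]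
  exact G.pow_mem (G.pow_mem hG _) _

theorem forall_mem_of_det_eq_one_or_isConjToSubgroupOf_borelSubset {ℓ : ℕ} [Fact ℓ.Prime]
    [NeZero (2 : ZMod ℓ)] {G : Subgroup (GL (Fin 2) (ZMod ℓ))} {g : GL (Fin 2) (ZMod ℓ)}
    (hg : g ∈ G) (hpar : g.IsParabolic) :
    (∀ x : GL (Fin 2) (ZMod ℓ), x.val.det = 1 → x ∈ G) ∨
      IsConjToSubgroupOf G (borelSubset ℓ) := by
  obtain ⟨P, u, hP⟩ := exists_conj_eq_scalar_mul_upperRightHom hpar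
  have hmem : MulAut.conj P g ∈ G.map (MulAut.conj P).toMonoidHom := G.mem_map_of_mem _ hg
  rw [MulAut.conj_apply, hP] at hmem
  rcases forall_mem_of_det_eq_one_or_forall_apply_one_zero_eq_zero
    (upperRightHom_mem_of_scalar_mul_upperRightHom_one_mem hmem) with h | h
  · refine Or.inl fun x hx => ?_
    obtain ⟨y, hy, hyx⟩ := h (P * x * P⁻¹) (by rw [← hx]; exact det_units_conj P x.val)
    exact (MulAut.conj P).injective hyx ▸ hy
  · exact Or.inr ⟨P, fun x hx => h _ (G.mem_map_of_mem (MulAut.conj P).toMonoidHom hx)⟩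

end Transvections

section NormalizedTraceless

variable {K : Type*} [Field K]

/-- The traceless `2 × 2` matrices of determinant `-1` or `-ε`, that is, of square `1` or `ε`.
When `ε` is a nonsquare in a finite field of odd characteristic, each maximal torus of `GL₂`
commutes with exactly two of them, `A` and `-A`, so this set, with the conjugation action, is a
double cover of the set of maximal tori. -/
def NormalizedTraceless (ε : K) : Type _ :=
  {A : Matrix (Fin 2) (Fin 2) K // A.trace = 0 ∧ (A.det = -1 ∨ A.det = -ε)}

namespace NormalizedTraceless

variable {ε : K}

instance [Finite K] : Finite (NormalizedTraceless ε) := Subtype.finite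

instance : Neg (NormalizedTraceless ε) where
  neg A := ⟨-A.1, by rw [trace_neg, A.2.1, neg_zero], by simpa [det_neg] using A.2.2⟩

instance : MulAction (GL (Fin 2) K) (NormalizedTraceless ε) where
  smul g A := ⟨g.val * A.1 * g⁻¹.val, by
    rw [trace_units_conj, det_units_conj]
    exact A.2⟩
  one_smul A := Subtype.ext (by change 1 * A.1 * _ = _; simp)
  mul_smul g h A := Subtype.ext (by
    change (g * h).val * A.1 * (g * h)⁻¹.val = g.val * (h.val * A.1 * h⁻¹.val) * g⁻¹.val
    simp only [_root_.mul_inv_rev, Units.val_mul, mul_assoc])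

theorem smul_eq_iff {g : GL (Fin 2) K} {A B : NormalizedTraceless ε} :
    g • A = B ↔ SemiconjBy g.val A.1 B.1 :=
  Subtype.ext_iff.trans (Units.mul_inv_eq_iff_eq_mul g)

theorem det_ne_zero (hε : ¬ IsSquare ε) (A : NormalizedTraceless ε) : A.1.det ≠ 0 := by
  have hε0 : ε ≠ 0 := fun h => hε (h ▸ IsSquare.zero)
  rcases A.2.2 with h | h <;> simp [h, hε0]

theorem ne_neg [NeZero (2 : K)] (hε : ¬ IsSquare ε) (A : NormalizedTraceless ε) : A ≠ -A := by
  intro h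
  have hA : (2 : K) • A.1 = 0 := by
    rw [two_smul, ← eq_neg_iff_add_eq_zero]
    exact congrArg Subtype.val h
  rw [smul_eq_zero_iff_right two_ne_zero] at hA
  exact A.det_ne_zero hε (by simp [hA])

theorem eq_or_eq_neg_of_commute [NeZero (2 : K)] (hε : ¬ IsSquare ε) {A B : NormalizedTraceless ε}
    (h : Commute A.1 B.1) : B = A ∨ B = -A := by
  obtain ⟨s, hs⟩ := exists_eq_smul_of_commute_of_trace_eq_zero A.2.1 B.2.1 (A.det_ne_zero hε) h
  have hdet : B.1.det = s ^ 2 * A.1.det := by rw [hs, det_smul, Fintype.card_fin]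
  have hε0 : ε ≠ 0 := fun h => hε (h ▸ IsSquare.zero)
  have hs1 : s ^ 2 = 1 := by
    rcases A.2.2 with hA | hA <;> rcases B.2.2 with hB | hB <;> rw [hA, hB] at hdet
    · linear_combination hdet
    · exact absurd ⟨s, by linear_combination -hdet⟩ hε
    · have hs0 : s ≠ 0 := by rintro rfl; simp at hdet
      exact absurd ⟨s⁻¹, by field_simp; linear_combination hdet⟩ hε
    · exact mul_right_cancel₀ hε0 (by linear_combination hdet)
  rcases sq_eq_one_iff.1 hs1 with rfl | rfl
  · exact Or.inl (Subtype.ext (by rw [hs, one_smul]))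
  · exact Or.inr (Subtype.ext (hs.trans (neg_one_smul K A.1)))

end NormalizedTraceless

theorem exists_sq_mul_eq_one_or_eq [Finite K] {ε δ : K} (hε : ¬ IsSquare ε) (hδ : δ ≠ 0) :
    ∃ s, s ≠ 0 ∧ (s ^ 2 * δ = 1 ∨ s ^ 2 * δ = ε) := by
  classical
  have := Fintype.ofFinite K
  have hε0 : ε ≠ 0 := fun h => hε (h ▸ IsSquare.zero)
  by_cases hsq : IsSquare δ
  · obtain ⟨r, rfl⟩ := hsq
    have hr : r ≠ 0 := left_ne_zero_of_mul hδ
    exact ⟨r⁻¹, inv_ne_zero hr, Or.inl (by field_simp)⟩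
  · obtain ⟨r, hr⟩ : IsSquare (δ * ε) := by
      rw [← quadraticChar_one_iff_isSquare (mul_ne_zero hδ hε0), map_mul,
        quadraticChar_neg_one_iff_not_isSquare.2 hsq, quadraticChar_neg_one_iff_not_isSquare.2 hε,
        neg_one_mul, neg_neg]
    have hr0 : r ≠ 0 := left_ne_zero_of_mul (hr ▸ mul_ne_zero hδ hε0)
    refine ⟨ε / r, div_ne_zero hε0 hr0, Or.inr ?_⟩
    field_simp
    linear_combination hr

theorem exists_normalizedTraceless_commute_iff [Finite K] [NeZero (2 : K)] {ε : K}
    (hε : ¬ IsSquare ε) {M : Matrix (Fin 2) (Fin 2) K} (hM : M.discr ≠ 0) :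
    ∃ A : NormalizedTraceless ε, ∀ B, Commute A.1 B ↔ Commute M B := by
  obtain ⟨s, hs0, hs⟩ := exists_sq_mul_eq_one_or_eq hε
    (div_ne_zero hM (mul_ne_zero two_ne_zero two_ne_zero : (2 : K) * 2 ≠ 0))
  have htrace : (M - scalar (Fin 2) (M.trace / 2)).trace = 0 := by
    simp [trace_sub, mul_div_cancel₀ _ (two_ne_zero' K)]
  have hdet : (M - scalar (Fin 2) (M.trace / 2)).det = -(M.discr / (2 * 2)) := by
    rw [discr_fin_two]
    simp only [det_fin_two, trace_fin_two, Matrix.sub_apply, scalar_apply, diagonal_apply_eq,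
      diagonal_apply_ne, ne_eq, zero_ne_one, one_ne_zero, not_false_eq_true, sub_zero]
    field_simp
    ring
  refine ⟨⟨s • (M - scalar (Fin 2) (M.trace / 2)), ?_, ?_⟩, fun B => ?_⟩
  · rw [trace_smul, htrace, smul_zero]
  · rw [det_smul, hdet, Fintype.card_fin, mul_neg]
    exact hs.imp (congrArg _) (congrArg _)
  · have hscalar : Commute (scalar (Fin 2) (M.trace / 2)) B :=
      scalar_commute _ (Commute.all _) B
    refine (Commute.smul_left_iff₀ hs0).trans ⟨fun h => ?_, fun h => h.sub_left hscalar⟩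
    exact sub_add_cancel M (scalar (Fin 2) (M.trace / 2)) ▸ h.add_left hscalar

theorem ncard_fixedBy_normalizedTraceless [Finite K] [NeZero (2 : K)] {ε : K}
    (hε : ¬ IsSquare ε) {g : GL (Fin 2) K} (hg : g.val.discr ≠ 0) :
    (MulAction.fixedBy (NormalizedTraceless ε) g).ncard = 2 := by
  obtain ⟨A, hA⟩ := exists_normalizedTraceless_commute_iff hε hg
  have hfixed : MulAction.fixedBy (NormalizedTraceless ε) g = {A, -A} := by
    ext B
    rw [MulAction.mem_fixedBy, NormalizedTraceless.smul_eq_iff]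
    refine (hA B.1).symm.trans ⟨NormalizedTraceless.eq_or_eq_neg_of_commute hε, ?_⟩
    rintro (rfl | rfl)
    · exact Commute.refl _
    · exact (Commute.refl A.1).neg_right
  rw [hfixed, Set.ncard_pair (A.ne_neg hε)]

end NormalizedTraceless

section CartanNormalizers

open MulAction

namespace NormalizedTraceless

variable {K : Type*} [Field K] {ε : K}

theorem smul_neg (g : GL (Fin 2) K) (A : NormalizedTraceless ε) : g • -A = -(g • A) :=
  smul_eq_iff.2 (SemiconjBy.neg_right (smul_eq_iff.1 rfl))

theorem stabilizer_neg (A : NormalizedTraceless ε) :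
    stabilizer (GL (Fin 2) K) (-A) = stabilizer (GL (Fin 2) K) A := by
  ext g
  exact smul_eq_iff.trans (Commute.neg_right_iff.trans smul_eq_iff.symm)

theorem mem_normalizer_stabilizer {g : GL (Fin 2) K} {A : NormalizedTraceless ε}
    (h : g • A = A ∨ g • A = -A) :
    g ∈ Subgroup.normalizer (stabilizer (GL (Fin 2) K) A : Set (GL (Fin 2) K)) := by
  rcases h with h | h
  · exact Subgroup.le_normalizer h
  · refine Subgroup.mem_normalizer_iff_map_conj_eq.2 ?_
    exact (stabilizer_smul_eq_stabilizer_map_conj g A).symm.trans (by rw [h, stabilizer_neg])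

theorem smul_eq_of_mem_center {g : GL (Fin 2) K} (hg : g ∈ Subgroup.center (GL (Fin 2) K))
    (A : NormalizedTraceless ε) : g • A = A := by
  obtain ⟨r, hr⟩ := GeneralLinearGroup.mem_center_iff_val_mem_range_scalar.1 hg
  exact smul_eq_iff.2 (hr ▸ scalar_commute r (Commute.all r) A.1)

theorem exists_forall_smul_eq_or_eq_neg_or_isPolyhedral [Finite K] [NeZero (2 : K)]
    (hε : ¬ IsSquare ε) {G : Subgroup (GL (Fin 2) K)}
    (hG : ¬ G ≤ Subgroup.center (GL (Fin 2) K)) (hpar : ∀ g ∈ G, ¬ g.IsParabolic) :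
    (∃ A : NormalizedTraceless ε, ∀ g ∈ G, g • A = A ∨ g • A = -A) ∨
      IsPolyhedral (G.map (QuotientGroup.mk' (Subgroup.center (GL (Fin 2) K)))) := by
  have hfix : ∀ g ∈ G, g ∉ Subgroup.center (GL (Fin 2) K) →
      (fixedBy (NormalizedTraceless ε) g).ncard = 2 := fun g hg hgc =>
    ncard_fixedBy_normalizedTraceless hε fun hdiscr => hpar g hg
      ⟨mt GeneralLinearGroup.mem_center_iff_val_mem_range_scalar.2 hgc, hdiscr⟩
  refine (exists_forall_smul_mem_fixedBy_or_isPolyhedral_map_mk'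
    (fun g hg A => smul_eq_of_mem_center hg A) hG hfix).imp_left ?_
  rintro ⟨h, hh, hhc, hinv⟩
  obtain ⟨A, hA⟩ := Set.nonempty_of_ncard_ne_zero ((hfix h hh hhc).trans_ne two_ne_zero)
  have hneg : -A ∈ fixedBy (NormalizedTraceless ε) h := by
    rw [mem_fixedBy, smul_neg, hA]
  refine ⟨A, fun g hg => ?_⟩
  have hmem := hinv g hg A hA
  rwa [fixedBy_eq_pair (hfix h hh hhc) (A.ne_neg hε) hA hneg] at hmem

theorem notMem_range_scalar [NeZero (2 : K)] (hε : ¬ IsSquare ε) (A : NormalizedTraceless ε) :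
    A.1 ∉ Set.range (scalar (Fin 2)) := by
  rintro ⟨r, hr⟩
  have hr0 : r = 0 := by simpa [← hr, two_ne_zero] using A.2.1
  exact A.det_ne_zero hε (by simp [← hr, hr0])

theorem exists_smul_eq_of_det_eq [NeZero (2 : K)] (hε : ¬ IsSquare ε)
    {A B : NormalizedTraceless ε} (h : A.1.det = B.1.det) : ∃ g : GL (Fin 2) K, g • A = B := by
  obtain ⟨g, hg⟩ := exists_semiconjBy_of_trace_eq_of_det_eq (A.notMem_range_scalar hε)
    (B.notMem_range_scalar hε) (A.2.1.trans B.2.1.symm) h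
  exact ⟨g, smul_eq_iff.2 hg⟩

theorem isConjToSubgroupOf_normalizer_stabilizer {ℓ : ℕ} [Fact ℓ.Prime] [NeZero (2 : ZMod ℓ)]
    {ε : ZMod ℓ} (hε : ¬ IsSquare ε) {G : Subgroup (GL (Fin 2) (ZMod ℓ))}
    {A B : NormalizedTraceless ε} (hA : ∀ g ∈ G, g • A = A ∨ g • A = -A)
    (h : A.1.det = B.1.det) :
    IsConjToSubgroupOf G
      (Subgroup.normalizer (stabilizer (GL (Fin 2) (ZMod ℓ)) B : Set (GL (Fin 2) (ZMod ℓ)))) := by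
  obtain ⟨P, rfl⟩ := exists_smul_eq_of_det_eq hε h
  refine ⟨P, fun g hg => mem_normalizer_stabilizer ?_⟩
  rw [mul_smul, mul_smul, inv_smul_smul, ← smul_neg]
  exact (hA g hg).imp (congrArg _) (congrArg _)

/-- The base point whose stabilizer is the split Cartan subgroup. -/
def split (ε : K) : NormalizedTraceless ε :=
  ⟨!![1, 0; 0, -1], by simp [trace_fin_two], Or.inl (by simp [det_fin_two])⟩

/-- The base point whose stabilizer is the non-split Cartan subgroup. -/
def nonsplit (ε : K) : NormalizedTraceless ε :=
  ⟨!![0, ε; 1, 0], by simp [trace_fin_two], Or.inr (by simp [det_fin_two])⟩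

theorem det_split (ε : K) : (split ε).1.det = -1 := by simp [split, det_fin_two]

theorem det_nonsplit (ε : K) : (nonsplit ε).1.det = -ε := by simp [nonsplit, det_fin_two]

theorem coe_stabilizer_split {ℓ : ℕ} [Fact ℓ.Prime] [NeZero (2 : ZMod ℓ)] (ε : ZMod ℓ) :
    (stabilizer (GL (Fin 2) (ZMod ℓ)) (split ε) : Set (GL (Fin 2) (ZMod ℓ))) = splitCartan ℓ := by
  have eq_zero_of_eq_neg {a : ZMod ℓ} (ha : a = -a) : a = 0 := by
    rwa [eq_neg_iff_add_eq_zero, ← two_mul, mul_eq_zero_iff_left two_ne_zero] at ha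
  ext g
  refine smul_eq_iff.trans ⟨fun h => ⟨?_, ?_⟩, fun ⟨h01, h10⟩ => ?_⟩
  · exact eq_zero_of_eq_neg (by simpa [split, mul_apply] using (congrFun₂ h.eq 0 1).symm)
  · exact eq_zero_of_eq_neg (by simpa [split, mul_apply] using congrFun₂ h.eq 1 0)
  · ext i j
    fin_cases i <;> fin_cases j <;> simp [split, mul_apply, h01, h10]

theorem coe_stabilizer_nonsplit {ℓ : ℕ} [Fact ℓ.Prime] (ε : ZMod ℓ) :
    (stabilizer (GL (Fin 2) (ZMod ℓ)) (nonsplit ε) : Set (GL (Fin 2) (ZMod ℓ))) =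
      nonsplitCartan ℓ ε := by
  ext g
  refine smul_eq_iff.trans ⟨fun h => ⟨?_, ?_⟩, fun ⟨h11, h01⟩ => ?_⟩
  · simpa [nonsplit, mul_apply] using congrFun₂ h.eq 1 0
  · simpa [nonsplit, mul_apply] using congrFun₂ h.eq 0 0
  · ext i j
    fin_cases i <;> fin_cases j <;> simp [nonsplit, mul_apply, h11, h01, mul_comm]

theorem isConjToSubgroupOf_normalizer_splitCartan_or_nonsplitCartan {ℓ : ℕ} [Fact ℓ.Prime]
    [NeZero (2 : ZMod ℓ)] {ε : ZMod ℓ} (hε : ¬ IsSquare ε) {G : Subgroup (GL (Fin 2) (ZMod ℓ))}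
    {A : NormalizedTraceless ε} (hA : ∀ g ∈ G, g • A = A ∨ g • A = -A) :
    IsConjToSubgroupOf G (Subgroup.normalizer (splitCartan ℓ) : Set (GL (Fin 2) (ZMod ℓ))) ∨
      IsConjToSubgroupOf G
        (Subgroup.normalizer (nonsplitCartan ℓ ε) : Set (GL (Fin 2) (ZMod ℓ))) := by
  rw [← coe_stabilizer_split ε, ← coe_stabilizer_nonsplit]
  refine A.2.2.imp (fun hdet => ?_) (fun hdet => ?_) <;>
    refine isConjToSubgroupOf_normalizer_stabilizer hε hA (hdet.trans ?_)
  · exact (det_split ε).symm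
  · exact (det_nonsplit ε).symm

end NormalizedTraceless

theorem isConjToSubgroupOf_borelSubset_of_le_center {ℓ : ℕ} {G : Subgroup (GL (Fin 2) (ZMod ℓ))}
    (hG : G ≤ Subgroup.center (GL (Fin 2) (ZMod ℓ))) : IsConjToSubgroupOf G (borelSubset ℓ) := by
  refine ⟨1, fun x hx => ?_⟩
  obtain ⟨r, hr⟩ := GeneralLinearGroup.mem_center_iff_val_mem_range_scalar.1 (hG hx)
  simp [borelSubset, ← hr]

end CartanNormalizers

/-- Dickson's classification of the subgroups of `GL₂(𝔽_ℓ)` for an odd prime `ℓ`. -/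
theorem stmt_5 (ℓ : ℕ) [Fact ℓ.Prime] (hodd : Odd ℓ) (ε : ZMod ℓ) (hε : ¬ IsSquare ε)
    (G : Subgroup (GL (Fin 2) (ZMod ℓ))) :
    -- (1) `G` contains `SL₂(𝔽_ℓ)`
    (∀ x : GL (Fin 2) (ZMod ℓ), (x : Matrix (Fin 2) (Fin 2) (ZMod ℓ)).det = 1 → x ∈ G) ∨
    -- (2) `G` is conjugate to a subgroup of the Borel subgroup
    IsConjToSubgroupOf G (borelSubset ℓ) ∨
    -- (3) `G` is conjugate to a subgroup of the non-split Cartan subgroup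
    IsConjToSubgroupOf G (nonsplitCartan ℓ ε) ∨
    -- (4) `G` is conjugate to a subgroup of `𝒞_s⁺(ℓ)` but not to any subgroup of `𝒞_s(ℓ)`
    (IsConjToSubgroupOf G (Subgroup.setNormalizer (splitCartan ℓ) : Set (GL (Fin 2) (ZMod ℓ))) ∧
      ¬ IsConjToSubgroupOf G (splitCartan ℓ)) ∨
    -- (5) `G` is conjugate to a subgroup of `𝒞_ns⁺(ℓ)` but not to any subgroup of `𝒞_ns(ℓ)`
    (IsConjToSubgroupOf G
        (Subgroup.setNormalizer (nonsplitCartan ℓ ε) : Set (GL (Fin 2) (ZMod ℓ))) ∧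
      ¬ IsConjToSubgroupOf G (nonsplitCartan ℓ ε)) ∨
    -- (6) the image of `G` in `PGL₂(𝔽_ℓ)` is isomorphic to `A₄`, `S₄`, or `A₅`
    (Nonempty ((G.map (QuotientGroup.mk' (Subgroup.center (GL (Fin 2) (ZMod ℓ)))))
        ≃* alternatingGroup (Fin 4)) ∨
     Nonempty ((G.map (QuotientGroup.mk' (Subgroup.center (GL (Fin 2) (ZMod ℓ)))))
        ≃* Equiv.Perm (Fin 4)) ∨
     Nonempty ((G.map (QuotientGroup.mk' (Subgroup.center (GL (Fin 2) (ZMod ℓ)))))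
        ≃* alternatingGroup (Fin 5))) := by
  have : NeZero (2 : ZMod ℓ) := ⟨Ring.two_ne_zero (by
    rw [ZMod.ringChar_zmod_n]
    rintro rfl
    exact absurd hodd (by decide))⟩
  by_cases hpar : ∃ g ∈ G, g.IsParabolic
  · obtain ⟨g, hg, hgpar⟩ := hpar
    exact (forall_mem_of_det_eq_one_or_isConjToSubgroupOf_borelSubset hg hgpar).imp_right Or.inl
  push Not at hpar
  by_cases hcenter : G ≤ Subgroup.center (GL (Fin 2) (ZMod ℓ))
  · exact Or.inr (Or.inl (isConjToSubgroupOf_borelSubset_of_le_center hcenter))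
  rcases NormalizedTraceless.exists_forall_smul_eq_or_eq_neg_or_isPolyhedral hε hcenter hpar
    with ⟨A, hA⟩ | hpolyhedral
  · rcases NormalizedTraceless.isConjToSubgroupOf_normalizer_splitCartan_or_nonsplitCartan hε hA
      with hnorm | hnorm
    · by_cases hsplit : IsConjToSubgroupOf G (splitCartan ℓ)
      · exact Or.inr (Or.inl (hsplit.imp fun P hP x hx => (hP x hx).2))
      · exact Or.inr (Or.inr (Or.inr (Or.inl ⟨hnorm, hsplit⟩)))
    · by_cases hnonsplit : IsConjToSubgroupOf G (nonsplitCartan ℓ ε)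
      · exact Or.inr (Or.inr (Or.inl hnonsplit))
      · exact Or.inr (Or.inr (Or.inr (Or.inr (Or.inl ⟨hnorm, hnonsplit⟩))))
  · exact Or.inr (Or.inr (Or.inr (Or.inr (Or.inr hpolyhedral))))
end

section
/- Let ℓ be a prime, let r ≥ 1, let Γ be a group, and let ρ₁, ρ₂ : Γ → GL_r(ℤ_ℓ) be group homomorphisms. Let A be the ℤ_ℓ-subalgebra of Mat_{r×r}(ℤ_ℓ) × Mat_{r×r}(ℤ_ℓ) generated by the image of Γ under the product map ρ₁ × ρ₂, let G′ be the image of Γ in A/ℓA, and let H be the image in A/ℓA of the set of pairs of scalar matrices {(μI_r, μI_r) : μ ∈ ℤ_ℓ^×}. Then H ∩ G′ is a normal subgroup of G′ and the quotient G := G′/(H ∩ G′) has order at most (ℓ^(2r²) − 1)/(ℓ − 1). -/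
set_option synthInstance.maxHeartbeats 400000
set_option maxHeartbeats 1000000

open Matrix

/-!
The ring `A/ℓA` is an algebra over `𝔽_ℓ` of dimension `n ≤ 2r²`, and every unit of `𝔽_ℓ` lifts to
`ℤ_ℓ`, so `H` is the group of `𝔽_ℓ`-scalar units of `A/ℓA`. These are central, and two units of
`A/ℓA` differ by an element of `H` exactly when they span the same line. Hence `(A/ℓA)ˣ/H` injects
into the projective space of `A/ℓA`, which has `(ℓⁿ - 1)/(ℓ - 1)` points.
-/

open IsLocalRing

open scoped LinearAlgebra.Projectivization

theorem relIndex_le_index {G : Type*} [Group G] (H K : Subgroup G) [H.FiniteIndex] :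
    H.relIndex K ≤ H.index := by
  simpa using Subgroup.relIndex_le_of_le_right (le_top : K ≤ ⊤)
    (by simpa using Subgroup.FiniteIndex.index_ne_zero (H := H))

/-- The group of scalar units of an `R`-algebra `Q`: the image of `Rˣ` in `Qˣ`, which is in general
smaller than the group of those units of `Q` that lie in the image of `R`. -/
def scalarUnits (R Q : Type*) [CommSemiring R] [Semiring Q] [Algebra R Q] : Subgroup Qˣ :=
  (Units.map (algebraMap R Q : R →* Q)).range

section Scalar

variable (R Q : Type*) [CommSemiring R] [Semiring Q] [Algebra R Q]

theorem scalarUnits_le_center : scalarUnits R Q ≤ Subgroup.center Qˣ := by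
  rintro _ ⟨μ, rfl⟩
  exact Subgroup.mem_center_iff.mpr fun u ↦ Units.ext (Algebra.commutes (μ : R) (u : Q)).symm

instance scalarUnits_normal : (scalarUnits R Q).Normal where
  conj_mem u hu v := by
    rwa [Subgroup.mem_center_iff.mp (scalarUnits_le_center R Q hu) v, mul_inv_cancel_right]

theorem scalarUnits_eq_of_surjective_units_map (K : Type*) [CommSemiring K] [Algebra R K]
    [Algebra K Q] [IsScalarTower R K Q]
    (hsurj : Function.Surjective (Units.map (algebraMap R K : R →* K))) :
    scalarUnits R Q = scalarUnits K Q := by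
  have hcomp : (algebraMap R Q : R →* Q) = (algebraMap K Q : K →* Q).comp (algebraMap R K) :=
    congrArg RingHom.toMonoidHom (IsScalarTower.algebraMap_eq R K Q)
  rw [scalarUnits, scalarUnits, hcomp, Units.map_comp, MonoidHom.range_comp,
    MonoidHom.range_eq_top.mpr hsurj, ← MonoidHom.range_eq_map]

end Scalar

section Field

variable (K : Type*) {Q : Type*} [Field K] [Ring Q] [Algebra K Q]

theorem mk_unit_eq_mk_unit_iff [Nontrivial Q] (u v : Qˣ) :
    Projectivization.mk K (u : Q) u.ne_zero = Projectivization.mk K (v : Q) v.ne_zero ↔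
      u⁻¹ * v ∈ scalarUnits K Q := by
  rw [eq_comm, Projectivization.mk_eq_mk_iff]
  refine exists_congr fun μ ↦ ?_
  rw [eq_inv_mul_iff_mul_eq, ← Units.val_inj, Units.smul_def, Algebra.smul_def, Algebra.commutes]
  rfl

variable (Q)

theorem index_scalarUnits_le_card_projectivization [Nontrivial Q] [Finite (ℙ K Q)] :
    (scalarUnits K Q).index ≤ Nat.card (ℙ K Q) := by
  refine Nat.card_le_card_of_injective
    (fun x : Qˣ ⧸ scalarUnits K Q ↦ Projectivization.mk K (x.out : Q) x.out.ne_zero)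
    fun x y hxy ↦ ?_
  rw [← QuotientGroup.out_eq' x, ← QuotientGroup.out_eq' y]
  exact QuotientGroup.eq.mpr ((mk_unit_eq_mk_unit_iff K _ _).mp hxy)

theorem index_scalarUnits_le [Finite K] [Module.Finite K Q] {N : ℕ} (hN : 0 < N)
    (hdim : Module.finrank K Q ≤ N) :
    (scalarUnits K Q).index ≤ (Nat.card K ^ N - 1) / (Nat.card K - 1) := by
  have : Finite Q := Module.finite_of_finite K
  rw [← Nat.geomSum_eq Finite.one_lt_card]
  cases subsingleton_or_nontrivial Q with
  | inl _ =>
    rw [Subsingleton.elim (scalarUnits K Q) ⊤, Subgroup.index_top]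
    simpa using Finset.single_le_sum (f := fun i ↦ Nat.card K ^ i) (fun _ _ ↦ Nat.zero_le _)
      (Finset.mem_range.mpr hN)
  | inr _ =>
    calc (scalarUnits K Q).index ≤ Nat.card (ℙ K Q) :=
          index_scalarUnits_le_card_projectivization K Q
      _ = ∑ i ∈ Finset.range (Module.finrank K Q), Nat.card K ^ i :=
          Projectivization.card_of_finrank K Q rfl
      _ ≤ ∑ i ∈ Finset.range N, Nat.card K ^ i :=
          Finset.sum_le_sum_of_subset (Finset.range_subset_range.mpr hdim)

end Field

theorem finrank_le_finrank_of_surjective_of_isScalarTower {R K M V : Type*} [CommRing R]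
    [CommRing K] [Nontrivial K] [Algebra R K] [AddCommGroup M] [Module R M] [Module.Free R M]
    [Module.Finite R M] [AddCommGroup V] [Module R V] [Module K V] [IsScalarTower R K V]
    (f : M →ₗ[R] V) (hf : Function.Surjective f) : Module.finrank K V ≤ Module.finrank R M := by
  have : Nontrivial R := (algebraMap R K).domain_nontrivial
  have hsurj : Function.Surjective (f.liftBaseChange K) := fun v ↦ by
    obtain ⟨m, rfl⟩ := hf v
    exact ⟨1 ⊗ₜ m, by rw [LinearMap.liftBaseChange_tmul, one_smul]⟩
  rw [← Module.finrank_baseChange (R := K) (S := R) (M' := M)]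
  exact LinearMap.finrank_le_finrank_of_surjective hsurj

section LocalRing

variable {R Q : Type*} [CommRing R] [IsLocalRing R] [Ring Q] [Algebra R Q]

/-- The structure of algebra over the residue field carried by an algebra over a local ring that is
killed by the maximal ideal. -/
noncomputable abbrev residueFieldAlgebra
    (hker : maximalIdeal R ≤ RingHom.ker (algebraMap R Q)) : Algebra (ResidueField R) Q :=
  RingHom.toAlgebra' (Ideal.Quotient.lift (maximalIdeal R) (algebraMap R Q) hker) fun c q ↦ by
    obtain ⟨a, rfl⟩ := residue_surjective c
    exact Algebra.commutes a q

theorem isScalarTower_residueFieldAlgebra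
    (hker : maximalIdeal R ≤ RingHom.ker (algebraMap R Q)) :
    letI := residueFieldAlgebra hker
    IsScalarTower R (ResidueField R) Q :=
  letI := residueFieldAlgebra hker
  .of_algebraMap_eq fun _ ↦ rfl

variable [Finite (ResidueField R)]

theorem finite_of_maximalIdeal_le_ker [Module.Finite R Q]
    (hker : maximalIdeal R ≤ RingHom.ker (algebraMap R Q)) : Finite Q := by
  let := residueFieldAlgebra hker
  have := isScalarTower_residueFieldAlgebra hker
  have : Module.Finite (ResidueField R) Q := .of_restrictScalars_finite R _ _
  exact Module.finite_of_finite (ResidueField R)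

theorem index_scalarUnits_le_of_surjective {M : Type*} [AddCommGroup M] [Module R M]
    [Module.Free R M] [Module.Finite R M] (f : M →ₗ[R] Q) (hf : Function.Surjective f)
    (hker : maximalIdeal R ≤ RingHom.ker (algebraMap R Q)) {N : ℕ} (hN : 0 < N)
    (hrank : Module.finrank R M ≤ N) :
    (scalarUnits R Q).index ≤
      (Nat.card (ResidueField R) ^ N - 1) / (Nat.card (ResidueField R) - 1) := by
  let := residueFieldAlgebra hker
  have := isScalarTower_residueFieldAlgebra hker
  have : Module.Finite R Q := .of_surjective f hf
  have : Module.Finite (ResidueField R) Q := .of_restrictScalars_finite R _ _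
  have hunits : Function.Surjective
      (Units.map (algebraMap R (ResidueField R) : R →* ResidueField R)) :=
    surjective_units_map_of_local_ringHom (residue R) residue_surjective inferInstance
  have hdim : Module.finrank (ResidueField R) Q ≤ N :=
    (finrank_le_finrank_of_surjective_of_isScalarTower f hf).trans hrank
  rw [scalarUnits_eq_of_surjective_units_map R Q (ResidueField R) hunits]
  exact index_scalarUnits_le _ Q hN hdim

end LocalRing

section PadicInt

variable (ℓ : ℕ) [Fact ℓ.Prime]

instance finite_residueField_padicInt : Finite (ResidueField ℤ_[ℓ]) :=
  .of_equiv _ PadicInt.residueField.symm.toEquiv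

theorem card_residueField_padicInt : Nat.card (ResidueField ℤ_[ℓ]) = ℓ :=
  (Nat.card_congr PadicInt.residueField.toEquiv).trans (Nat.card_zmod ℓ)

theorem maximalIdeal_padicInt_le_ker_algebraMap_quotient_span (A : Type*) [Ring A]
    [Algebra ℤ_[ℓ] A] : maximalIdeal ℤ_[ℓ] ≤
      RingHom.ker (algebraMap ℤ_[ℓ] (TwoSidedIdeal.span {(ℓ : A)}).ringCon.Quotient) := by
  rw [PadicInt.maximalIdeal_eq_span_p, Ideal.span_singleton_le_iff_mem, RingHom.mem_ker,
    map_natCast]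
  exact (RingCon.eq _).mpr (TwoSidedIdeal.subset_span rfl)

end PadicInt

theorem finrank_subalgebra_matrix_prod_le {R m n : Type*} [CommRing R] [Nontrivial R]
    [Fintype m] [DecidableEq m] [Fintype n] [DecidableEq n]
    (A : Subalgebra R (Matrix m m R × Matrix n n R)) :
    Module.finrank R A ≤ Fintype.card m ^ 2 + Fintype.card n ^ 2 := by
  refine (Submodule.finrank_le (Subalgebra.toSubmodule A)).trans_eq ?_
  rw [Module.finrank_prod, Module.finrank_matrix, Module.finrank_matrix, Module.finrank_self]
  ring

theorem stmt_11_general (ℓ : ℕ) [Fact ℓ.Prime] {A : Type*} [Ring A] [Algebra ℤ_[ℓ] A]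
    [Module.Free ℤ_[ℓ] A] [Module.Finite ℤ_[ℓ] A] {N : ℕ} (hN : 0 < N)
    (hrank : Module.finrank ℤ_[ℓ] A ≤ N)
    (h : ℤ_[ℓ]ˣ →* (TwoSidedIdeal.span {(ℓ : A)}).ringCon.Quotient)
    (hh : ∀ μ : ℤ_[ℓ]ˣ,
        h μ = ((algebraMap ℤ_[ℓ] A (μ : ℤ_[ℓ])) :
          (TwoSidedIdeal.span {(ℓ : A)}).ringCon.Quotient))
    (G' H : Subgroup ((TwoSidedIdeal.span {(ℓ : A)}).ringCon.Quotient)ˣ)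
    (hH : H = (MonoidHom.toHomUnits h).range) :
    ((H ⊓ G').subgroupOf G').Normal ∧
      Finite (G' ⧸ (H ⊓ G').subgroupOf G') ∧
      Nat.card (G' ⧸ (H ⊓ G').subgroupOf G') ≤ (ℓ ^ N - 1) / (ℓ - 1) := by
  let π : A →ₐ[ℤ_[ℓ]] (TwoSidedIdeal.span {(ℓ : A)}).ringCon.Quotient := RingCon.mkₐ _ _
  have hπ : Function.Surjective π := RingCon.mkₐ_surjective _
  have hker := maximalIdeal_padicInt_le_ker_algebraMap_quotient_span ℓ A
  have : Module.Finite ℤ_[ℓ] (TwoSidedIdeal.span {(ℓ : A)}).ringCon.Quotient :=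
    .of_surjective π.toLinearMap hπ
  have := finite_of_maximalIdeal_le_ker hker
  obtain rfl : H = scalarUnits ℤ_[ℓ] (TwoSidedIdeal.span {(ℓ : A)}).ringCon.Quotient :=
    hH.trans (congrArg MonoidHom.range (MonoidHom.ext fun μ ↦ Units.ext (hh μ)))
  rw [Subgroup.inf_subgroupOf_right]
  refine ⟨inferInstance, inferInstance, ?_⟩
  have hindex := index_scalarUnits_le_of_surjective π.toLinearMap hπ hker hN hrank
  rw [card_residueField_padicInt] at hindex
  exact (relIndex_le_index _ G').trans hindex

/-- Let `A` be the `ℤ_ℓ`-subalgebra of `Mat_r(ℤ_ℓ) × Mat_r(ℤ_ℓ)` generated by the image of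
`Γ` under `ρ₁ × ρ₂`, let `G′` be the image of `Γ` in `A/ℓA`, and let `H` be the image in
`A/ℓA` of the invertible scalar pairs `{(μI, μI) : μ ∈ ℤ_ℓ^×}`.  Then `H ∩ G′` is normal in
`G′` and `G = G′/(H ∩ G′)` has order at most `(ℓ^(2r²) − 1)/(ℓ − 1)`.
Here `A/ℓA` is realized as the quotient of `A` by the two-sided ideal generated by `ℓ`,
`f : Γ → A/ℓA` and `h : ℤ_ℓ^× → A/ℓA` are the induced maps (landing in the unit group via
`MonoidHom.toHomUnits`), and `G′`, `H` are their ranges in `(A/ℓA)ˣ`. -/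
theorem stmt_11 (ℓ : ℕ) [Fact ℓ.Prime] (r : ℕ) (hr : 0 < r) (Γ : Type*) [Group Γ]
    (ρ₁ ρ₂ : Γ →* GL (Fin r) ℤ_[ℓ])
    (A : Subalgebra ℤ_[ℓ] (Matrix (Fin r) (Fin r) ℤ_[ℓ] × Matrix (Fin r) (Fin r) ℤ_[ℓ]))
    (hA : A = Algebra.adjoin ℤ_[ℓ] (Set.range fun γ : Γ =>
        ((ρ₁ γ : Matrix (Fin r) (Fin r) ℤ_[ℓ]), (ρ₂ γ : Matrix (Fin r) (Fin r) ℤ_[ℓ]))))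
    -- `f` is the map `Γ → A/ℓA` induced by `ρ₁ × ρ₂`
    (f : Γ →* (TwoSidedIdeal.span {(ℓ : A)}).ringCon.Quotient)
    (hf : ∀ (γ : Γ)
        (hmem : ((ρ₁ γ : Matrix (Fin r) (Fin r) ℤ_[ℓ]),
            (ρ₂ γ : Matrix (Fin r) (Fin r) ℤ_[ℓ])) ∈ A),
        f γ = ((⟨_, hmem⟩ : A) : (TwoSidedIdeal.span {(ℓ : A)}).ringCon.Quotient))
    -- `h` is the map `ℤ_ℓ^× → A/ℓA` sending `μ` to the image of the scalar pair `(μI, μI)`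
    (h : ℤ_[ℓ]ˣ →* (TwoSidedIdeal.span {(ℓ : A)}).ringCon.Quotient)
    (hh : ∀ μ : ℤ_[ℓ]ˣ,
        h μ = ((algebraMap ℤ_[ℓ] A (μ : ℤ_[ℓ])) :
          (TwoSidedIdeal.span {(ℓ : A)}).ringCon.Quotient)) :
    ∀ (G' H : Subgroup ((TwoSidedIdeal.span {(ℓ : A)}).ringCon.Quotient)ˣ),
      G' = (MonoidHom.toHomUnits f).range →
      H = (MonoidHom.toHomUnits h).range →
      ((H ⊓ G').subgroupOf G').Normal ∧
      Finite (G' ⧸ (H ⊓ G').subgroupOf G') ∧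
      Nat.card (G' ⧸ (H ⊓ G').subgroupOf G') ≤ (ℓ ^ (2 * r ^ 2) - 1) / (ℓ - 1) := by
  intro G' H _ hH
  have : Module.Free ℤ_[ℓ] A := inferInstanceAs (Module.Free ℤ_[ℓ] (Subalgebra.toSubmodule A))
  have : Module.Finite ℤ_[ℓ] A := inferInstanceAs (Module.Finite ℤ_[ℓ] (Subalgebra.toSubmodule A))
  have hrank : Module.finrank ℤ_[ℓ] A ≤ 2 * r ^ 2 := by
    simpa [two_mul] using finrank_subalgebra_matrix_prod_le A
  exact stmt_11_general ℓ (by positivity) hrank h hh G' H hH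
end
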